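/- arXiv:1407.4720 — 4 statements merged into one kernel-verified Lean document; each statement's English description precedes it below -/
import Mathlib

section
/- For all but finitely many pairs of integers (k,n) with 1 < k < n, d(k,n) = C(n-1,k). Formally: the set of pairs (k,n) with 1 < k < n such that d(k,n) ≠ C(n-1,k) is finite. -/
/-- `d_k(A)`: the number of `k`-element subsets of `A` that are divisors of `A`,
where `B` is a divisor of `A` if `∑ B` divides `∑ A`. -/
def dk (k : ℕ) (A : Finset ℕ) : ℕ :=
  ((A.powersetCard k).filter (fun B => B.sum id ∣ A.sum id)).card

/-- `d(k, n)`: the maximum of `d_k(A)` over all sets `A` of `n` positive integers. -/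
noncomputable def dn (k n : ℕ) : ℕ :=
  sSup {t : ℕ | ∃ A : Finset ℕ, (∀ a ∈ A, 0 < a) ∧ A.card = n ∧ dk k A = t}

/-!
The lower bound comes from `{1, …, n - 1}` together with one huge element making the total a
factorial. For the upper bound let `S` be the sum of `A`. A proper divisor has sum at most `S / 2`,
so no divisor with at least two elements contains an element `≥ S / 2`; if there is such an element
we are done.

* `n < 2k`: two divisors cannot cover `A`, since their sums would add up to more than `S`. Their
  complements thus intersect, and Erdős–Ko–Rado applies.
* `2k ≤ n < 2000k`: let `κ = k / n`. By the second moment of the sum of the complement, at most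
  `(1 - κ / 4) C(n - 1, k)` of the `k`-sets have sum below `κ S / 8`. Divisors with larger sum are
  rare: the extensions of a fixed `(k - 1)`-set to such divisors have distinct integer quotients
  `S / ∑ B ≤ 8 / κ`.
* `2000k ≤ n`: if two elements are at least `3S / n`, few divisors contain either of them, again
  by counting quotients. Otherwise put `W` for the `24k` largest elements apart from the maximum.
  A `(k - 1)`-set `T` meeting `W` has sum at least every element outside `W`, and then the
  `z ∉ W` completing `T` to a divisor add up to little more than `S / 3`, while all elements but
  the maximum add up to at least `S / 2`. So `T` has at least `n / 24` completions to
  non-divisors, which gives at least `C(n - 1, k - 1)` non-divisors in total.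
-/

open Finset

lemma mul_choose_le_mul_choose {a n j : ℕ} (han : a ≤ n) (hj : j ≠ 0) :
    n * a.choose j ≤ a * n.choose j := by
  obtain ⟨i, rfl⟩ := Nat.exists_eq_succ_of_ne_zero hj
  rcases a with - | a
  · simp
  obtain ⟨m, rfl⟩ : ∃ m, n = m + 1 := ⟨n - 1, by omega⟩
  refine Nat.le_of_mul_le_mul_right ?_ i.succ_pos
  calc (m + 1) * (a + 1).choose (i + 1) * (i + 1)
      = (m + 1) * ((a + 1) * a.choose i) := by rw [Nat.add_one_mul_choose_eq, mul_assoc]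
    _ ≤ (m + 1) * ((a + 1) * m.choose i) := by gcongr; omega
    _ = (a + 1) * ((m + 1) * m.choose i) := by ring
    _ = (a + 1) * (m + 1).choose (i + 1) * (i + 1) := by rw [Nat.add_one_mul_choose_eq, mul_assoc]

lemma choose_mul_sub_eq_mul_choose (n k : ℕ) :
    (n.choose k * (n - k) : ℝ) = n * (n - 1).choose k := by
  obtain hk | hk := lt_or_ge n k
  · rw [Nat.choose_eq_zero_of_lt hk, Nat.choose_eq_zero_of_lt (by omega), Nat.cast_zero, zero_mul,
      mul_zero]
  obtain rfl | hn := n.eq_zero_or_pos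
  · simp [Nat.le_zero.1 hk]
  have hsucc := Nat.choose_mul_succ_eq (n - 1) k
  rw [Nat.sub_add_cancel hn] at hsucc
  rw [← Nat.cast_sub hk, mul_comm (n : ℝ)]
  exact_mod_cast hsucc.symm

lemma ssubset_of_mem_powersetCard {α : Type*} {A B : Finset α} {k : ℕ} (hkA : k < #A)
    (hB : B ∈ A.powersetCard k) : B ⊂ A := by
  obtain ⟨hBA, rfl⟩ := mem_powersetCard.1 hB
  exact hBA.ssubset_of_ne fun h ↦ hkA.ne (congrArg card h)

lemma exists_subset_card_eq_forall_le {α : Type*} [LinearOrder α] (U : Finset α) {m : ℕ}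
    (hm : m ≤ #U) : ∃ W ⊆ U, #W = m ∧ ∀ w ∈ W, ∀ z ∈ U \ W, z ≤ w := by
  induction m with
  | zero => exact ⟨∅, by simp⟩
  | succ m ih =>
    obtain ⟨W, hWU, hW, hle⟩ := ih (by omega)
    have hne : (U \ W).Nonempty := by
      rw [← card_pos, card_sdiff_of_subset hWU]
      omega
    have hmem := max'_mem _ hne
    have hmax := fun z ↦ le_max' (U \ W) z
    refine ⟨insert ((U \ W).max' hne) W, ?_, ?_, ?_⟩ <;> grind

section Counting

variable {α : Type*} [DecidableEq α]

lemma succ_mul_card_filter_powersetCard_succ (P : Finset α → Prop) [DecidablePred P] (r : ℕ)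
    (U : Finset α) :
    (r + 1) * #{B ∈ U.powersetCard (r + 1) | P B} =
      ∑ T ∈ U.powersetCard r, #{z ∈ U \ T | P (insert z T)} := by
  calc (r + 1) * #{B ∈ U.powersetCard (r + 1) | P B}
      = ∑ B ∈ U.powersetCard (r + 1) with P B, #B := by
        rw [mul_comm, ← smul_eq_mul, ← sum_const]
        exact sum_congr rfl fun B hB ↦ (mem_powersetCard.1 (mem_filter.1 hB).1).2.symm
    _ = _ := by
        -- Both sides count pairs of a `(r + 1)`-set `B` with `P B` and an element of `B`.
        rw [← card_sigma, ← card_sigma]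
        refine card_nbij' (fun p ↦ ⟨p.1.erase p.2, p.2⟩) (fun p ↦ ⟨insert p.2 p.1, p.2⟩) ?_ ?_ ?_ ?_
        all_goals
          rintro ⟨B, z⟩ h
          simp only [mem_coe, mem_sigma, mem_filter, mem_powersetCard, mem_sdiff] at h ⊢
        · obtain ⟨⟨⟨hBU, hB⟩, hP⟩, hz⟩ := h
          rw [insert_erase hz, card_erase_of_mem hz, hB]
          exact ⟨⟨(erase_subset z B).trans hBU, rfl⟩, ⟨hBU hz, notMem_erase z B⟩, hP⟩
        · obtain ⟨⟨hTU, hT⟩, ⟨hzU, hz⟩, hP⟩ := h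
          rw [card_insert_of_notMem hz, hT]
          exact ⟨⟨⟨insert_subset hzU hTU, rfl⟩, hP⟩, mem_insert_self z B⟩
        · rw [insert_erase h.2]
        · rw [erase_insert h.2.1.2]

lemma sub_mul_card_filter_powersetCard_succ_le {P : Finset α → Prop} [DecidablePred P] {r : ℕ}
    {U : Finset α} {c : ℝ}
    (h : ∀ T ∈ U.powersetCard r, (#{z ∈ U \ T | P (insert z T)} : ℝ) ≤ c) :
    (#U - r : ℝ) * #{B ∈ U.powersetCard (r + 1) | P B} ≤ c * (#U).choose (r + 1) := by
  obtain hr | hr := lt_or_ge (#U) r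
  · rw [powersetCard_eq_empty.2 (by omega), Nat.choose_eq_zero_of_lt (by omega)]
    simp
  have hpairs : (r + 1 : ℝ) * #{B ∈ U.powersetCard (r + 1) | P B} ≤ (#U).choose r * c := by
    have hsum := sum_le_card_nsmul _ _ c h
    rw [card_powersetCard, nsmul_eq_mul] at hsum
    refine le_of_eq_of_le ?_ hsum
    exact_mod_cast succ_mul_card_filter_powersetCard_succ P r U
  have hchoose : ((#U).choose (r + 1) * (r + 1) : ℝ) = (#U).choose r * (#U - r) := by
    rw [← Nat.cast_sub hr]
    exact_mod_cast Nat.choose_succ_right_eq (#U) r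
  have hr' : (0 : ℝ) ≤ #U - r := sub_nonneg.2 (Nat.cast_le.2 hr)
  refine le_of_mul_le_mul_left ?_ (by positivity : (0 : ℝ) < r + 1)
  calc (r + 1) * ((#U - r) * (#{B ∈ U.powersetCard (r + 1) | P B} : ℝ))
      = (#U - r) * ((r + 1) * #{B ∈ U.powersetCard (r + 1) | P B}) := by ring
    _ ≤ (#U - r) * ((#U).choose r * c) := by gcongr
    _ = (r + 1) * (c * (#U).choose (r + 1)) := by linear_combination -c * hchoose

lemma card_filter_powersetCard_succ_insert (P : Finset α → Prop) [DecidablePred P] (r : ℕ)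
    {v : α} {U : Finset α} (hv : v ∉ U) :
    #{B ∈ (insert v U).powersetCard (r + 1) | P B} =
      #{B ∈ U.powersetCard (r + 1) | P B} + #{T ∈ U.powersetCard r | P (insert v T)} := by
  rw [powersetCard_succ_insert hv, filter_union, card_union_of_disjoint, filter_image,
    card_image_of_injOn]
  · intro T hT T' hT' h
    simp only [mem_coe, mem_filter, mem_powersetCard] at hT hT'
    rw [← erase_insert fun h ↦ hv (hT.1.1 h), h, erase_insert fun h ↦ hv (hT'.1.1 h)]
  · rw [disjoint_left]
    grind

lemma card_filter_powersetCard_disjoint (k : ℕ) {A D : Finset α} (hD : D ⊆ A) :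
    #{B ∈ A.powersetCard k | Disjoint B D} = (#A - #D).choose k := by
  rw [← card_sdiff_of_subset hD, ← card_powersetCard]
  congr 1
  ext B
  simp only [mem_filter, mem_powersetCard, subset_sdiff]
  tauto

lemma card_mul_choose_le_card_mul_card_filter_not_disjoint {W U : Finset α} {j : ℕ}
    (hWU : W ⊆ U) (hj : j ≠ 0) :
    #W * (#U).choose j ≤ #U * #{T ∈ U.powersetCard j | ¬ Disjoint T W} := by
  have hsplit := card_filter_add_card_filter_not (s := U.powersetCard j) (Disjoint · W)
  rw [card_filter_powersetCard_disjoint j hWU, card_powersetCard] at hsplit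
  have hle := mul_choose_le_mul_choose (Nat.sub_le (#U) (#W)) hj
  have hcard : #U - #W + #W = #U := Nat.sub_add_cancel (card_le_card hWU)
  nlinarith

lemma sum_sq_sum_sdiff_powersetCard {R : Type*} [CommRing R] (k : ℕ) (A : Finset α) (f : α → R) :
    ∑ B ∈ A.powersetCard k, (∑ i ∈ A \ B, f i) ^ 2 =
      (#A - 1).choose k * ∑ i ∈ A, f i ^ 2 +
      (#A - 2).choose k * ((∑ i ∈ A, f i) ^ 2 - ∑ i ∈ A, f i ^ 2) := by
  have hexpand (B : Finset α) : (∑ i ∈ A \ B, f i) ^ 2 =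
      ∑ i ∈ A, ∑ j ∈ A, if Disjoint B {i, j} then f i * f j else 0 := by
    simp only [sq, sum_mul_sum, disjoint_insert_right, disjoint_singleton_right, sdiff_eq_filter,
      sum_filter]
    refine sum_congr rfl fun i _ ↦ ?_
    by_cases hi : i ∈ B <;> simp [hi]
  have hrow : ∀ i ∈ A, ∑ j ∈ A, (#A - #{i, j}).choose k * (f i * f j) =
      (#A - 1).choose k * f i ^ 2 + (#A - 2).choose k * (f i * ∑ j ∈ A, f j - f i ^ 2) := by
    intro i hi
    rw [← add_sum_erase A _ hi, ← add_sum_erase A f hi, pair_eq_singleton, card_singleton,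
      sum_congr rfl fun j hj ↦ by rw [card_pair (ne_of_mem_erase hj).symm], ← mul_sum, ← mul_sum]
    ring
  calc ∑ B ∈ A.powersetCard k, (∑ i ∈ A \ B, f i) ^ 2
      = ∑ i ∈ A, ∑ j ∈ A, (#A - #{i, j}).choose k * (f i * f j) := by
        simp only [hexpand]
        rw [sum_comm]
        refine sum_congr rfl fun i hi ↦ ?_
        rw [sum_comm]
        refine sum_congr rfl fun j hj ↦ ?_
        rw [← sum_filter, sum_const, nsmul_eq_mul, card_filter_powersetCard_disjoint k (by grind)]
    _ = _ := by
        rw [sum_congr rfl hrow, sum_add_distrib, ← mul_sum, ← mul_sum, sum_sub_distrib, ← sum_mul,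
          sq (∑ i ∈ A, f i)]

lemma card_le_choose_of_forall_union_ne {k : ℕ} {A : Finset α} {𝓑 : Finset (Finset α)}
    (hkA : k < #A) (hAk : #A ≤ 2 * k) (h𝓑 : 𝓑 ⊆ A.powersetCard k)
    (hne : ∀ B ∈ 𝓑, ∀ C ∈ 𝓑, B ∪ C ≠ A) :
    #𝓑 ≤ (#A - 1).choose k := by
  let e : Fin #A ↪ α := A.equivFin.symm.toEmbedding.trans (.subtype _)
  let φ (B : Finset α) : Finset (Fin #A) := (A \ B).preimage e e.injective.injOn
  have hmap (B : Finset α) : (φ B).map e = A \ B := by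
    ext a
    simp only [φ, mem_map, mem_preimage]
    refine ⟨fun ⟨_, hi, hia⟩ ↦ hia ▸ hi, fun ha ↦ ⟨A.equivFin ⟨a, (mem_sdiff.1 ha).1⟩, ?_⟩⟩
    simpa [e] using ha
  have hsub {B : Finset α} (hB : B ∈ 𝓑) : B ⊆ A ∧ #B = k := mem_powersetCard.1 (h𝓑 hB)
  have hinj : Set.InjOn φ 𝓑 := by
    intro B hB C hC h
    have hBC : A \ B = A \ C := by rw [← hmap, ← hmap, h]
    rw [← Finset.sdiff_sdiff_eq_self (hsub hB).1, hBC, Finset.sdiff_sdiff_eq_self (hsub hC).1]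
  have hinter : (𝓑.image φ : Set (Finset (Fin #A))).Intersecting := by
    rw [coe_image]
    rintro - ⟨B, hB, rfl⟩ - ⟨C, hC, rfl⟩ hdisj
    rw [← disjoint_map e, hmap, hmap] at hdisj
    refine hne B hB C hC ((union_subset (hsub hB).1 (hsub hC).1).antisymm fun a ha ↦ ?_)
    by_contra haBC
    rw [mem_union, not_or] at haBC
    exact disjoint_left.1 hdisj (mem_sdiff.2 ⟨ha, haBC.1⟩) (mem_sdiff.2 ⟨ha, haBC.2⟩)
  have hsized : (𝓑.image φ : Set (Finset (Fin #A))).Sized (#A - k) := by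
    rw [coe_image]
    rintro - ⟨B, hB, rfl⟩
    rw [← card_map e, hmap, card_sdiff_of_subset (hsub hB).1, (hsub hB).2]
  have hEKR := erdos_ko_rado hinter hsized (by omega)
  rwa [card_image_of_injOn hinj, Nat.sub_right_comm, Nat.choose_symm (by omega)] at hEKR

end Counting

lemma card_filter_sum_lt_mul_sq_le {α : Type*} {A : Finset α} {f : α → ℝ} {k : ℕ}
    {p : ℝ} (hf : ∀ a ∈ A, 0 ≤ f a) (hmax : ∀ a ∈ A, 2 * f a ≤ ∑ i ∈ A, f i) (hkA : k < #A)
    (hp : p ≤ ∑ i ∈ A, f i) :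
    #{B ∈ A.powersetCard k | ∑ i ∈ B, f i < p} * (∑ i ∈ A, f i - p) ^ 2 ≤
      (1 - k / #A / 2) * (#A - 1).choose k * (∑ i ∈ A, f i) ^ 2 := by
  classical
  set S := ∑ i ∈ A, f i
  set Q := ∑ i ∈ A, f i ^ 2
  have hQ : Q ≤ S ^ 2 / 2 := calc
    Q ≤ ∑ i ∈ A, f i * (S / 2) :=
      sum_le_sum fun i hi ↦ by nlinarith [hf i hi, hmax i hi]
    _ = S ^ 2 / 2 := by rw [← sum_mul]; ring
  have hA : (0 : ℝ) < #A := Nat.cast_pos.2 (by omega)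
  have hchoose : ((#A - 2).choose k : ℝ) ≤ (1 - k / #A) * (#A - 1).choose k := by
    have hsub := choose_mul_sub_eq_mul_choose (#A - 1) k
    rw [Nat.cast_pred (by omega), Nat.sub_sub] at hsub
    have hmono : ((#A - 2).choose k : ℝ) ≤ (#A - 1).choose k :=
      Nat.cast_le.2 (Nat.choose_le_choose k (by omega))
    rw [one_sub_div hA.ne', div_mul_eq_mul_div, le_div_iff₀ hA]
    linarith
  calc #{B ∈ A.powersetCard k | ∑ i ∈ B, f i < p} * (S - p) ^ 2
      ≤ ∑ B ∈ A.powersetCard k with ∑ i ∈ B, f i < p, (∑ i ∈ A \ B, f i) ^ 2 := by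
        rw [← nsmul_eq_mul]
        refine card_nsmul_le_sum _ _ _ fun B hB ↦ ?_
        rw [mem_filter, mem_powersetCard] at hB
        have := sum_sdiff (f := f) hB.1.1
        gcongr
        linarith
    _ ≤ ∑ B ∈ A.powersetCard k, (∑ i ∈ A \ B, f i) ^ 2 :=
        sum_le_sum_of_subset_of_nonneg (filter_subset _ _) fun _ _ _ ↦ sq_nonneg _
    _ = (#A - 1).choose k * Q + (#A - 2).choose k * (S ^ 2 - Q) :=
        sum_sq_sum_sdiff_powersetCard k A f
    _ ≤ (#A - 1).choose k * Q + (1 - k / #A) * (#A - 1).choose k * (S ^ 2 - Q) := by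
        gcongr
        nlinarith [sq_nonneg S]
    _ = (1 - k / #A) * (#A - 1).choose k * S ^ 2 + k / #A * (#A - 1).choose k * Q := by ring
    _ ≤ (1 - k / #A) * (#A - 1).choose k * S ^ 2 + k / #A * (#A - 1).choose k * (S ^ 2 / 2) := by
        gcongr
    _ = _ := by ring

lemma card_filter_sum_lt_le {α : Type*} {A : Finset α} {f : α → ℝ} {k : ℕ}
    (hf : ∀ a ∈ A, 0 ≤ f a) (hmax : ∀ a ∈ A, 2 * f a ≤ ∑ i ∈ A, f i) (hkA : k < #A)
    (hS : 0 < ∑ i ∈ A, f i) :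
    #{B ∈ A.powersetCard k | ∑ i ∈ B, f i < k / #A * (∑ i ∈ A, f i) / 8} ≤
      (1 - k / #A / 4 : ℝ) * (#A - 1).choose k := by
  set κ : ℝ := k / #A with hκdef
  have hκ : 0 ≤ κ := by positivity
  have hκ1 : κ ≤ 1 := div_le_one_of_le₀ (Nat.cast_le.2 hkA.le) (Nat.cast_nonneg _)
  have hmoment := card_filter_sum_lt_mul_sq_le (p := κ * (∑ i ∈ A, f i) / 8) hf hmax hkA
    (by nlinarith only [hκ, hκ1, hS])
  rw [← hκdef] at hmoment
  set S := ∑ i ∈ A, f i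
  have hpos : 0 < S - κ * S / 8 := by nlinarith only [hκ1, hS]
  have hκ4 : 1 - κ / 2 ≤ (1 - κ / 4) * (1 - κ / 8) ^ 2 := by
    nlinarith [mul_nonneg (sq_nonneg κ) (by linarith : 0 ≤ 20 - κ)]
  refine le_of_mul_le_mul_right (hmoment.trans ?_) (pow_pos hpos 2)
  calc (1 - κ / 2) * (#A - 1).choose k * S ^ 2
      ≤ (1 - κ / 4) * (1 - κ / 8) ^ 2 * (#A - 1).choose k * S ^ 2 := by gcongr
    _ = (1 - κ / 4) * (#A - 1).choose k * (S - κ * S / 8) ^ 2 := by ring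

section Divisors

variable {ι : Type*} {Z : Finset ι} {f : ι → ℕ} {S : ℕ}

lemma card_le_of_forall_dvd_of_mem_Icc (hS : S ≠ 0) (hf : Set.InjOn f Z) {p q : ℝ} (hp : 0 < p)
    (hpq : p ≤ q) (hdvd : ∀ z ∈ Z, f z ∣ S) (hmem : ∀ z ∈ Z, (f z : ℝ) ∈ Set.Icc p q) :
    (#Z : ℝ) ≤ S / p - S / q + 1 := by
  -- The quotients `S / f z` are distinct integers between `S / q` and `S / p`.
  have hmaps : ∀ z ∈ Z, S / f z ∈ Icc ⌈S / q⌉₊ ⌊S / p⌋₊ := by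
    intro z hz
    have hz0 : (0 : ℝ) < f z := hp.trans_le (hmem z hz).1
    rw [mem_Icc, Nat.ceil_le, Nat.le_floor_iff (by positivity), Nat.cast_div (hdvd z hz) hz0.ne']
    exact ⟨div_le_div_of_nonneg_left S.cast_nonneg hz0 (hmem z hz).2,
      div_le_div_of_nonneg_left S.cast_nonneg hp (hmem z hz).1⟩
  have hinj : Set.InjOn (fun z ↦ S / f z) Z := fun z hz w hw h ↦
    hf hz hw ((Nat.div_eq_iff_eq_of_dvd_dvd hS (hdvd z hz) (hdvd w hw)).1 h)
  have hcard := card_le_card_of_injOn _ hmaps hinj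
  rw [Nat.card_Icc] at hcard
  have hfloor : (⌊S / p⌋₊ : ℝ) ≤ S / p := Nat.floor_le (by positivity)
  have hceil : S / q ≤ (⌈S / q⌉₊ : ℝ) := Nat.le_ceil _
  have hle : S / q ≤ S / p := div_le_div_of_nonneg_left S.cast_nonneg hp hpq
  obtain h | h := le_or_gt ⌈S / q⌉₊ (⌊S / p⌋₊ + 1)
  · rw [← Nat.cast_le (α := ℝ), Nat.cast_sub h] at hcard
    push_cast at hcard
    linarith
  · have : #Z = 0 := by omega
    rw [this, Nat.cast_zero]
    linarith

lemma card_le_div_of_forall_dvd (hS : S ≠ 0) (hf : Set.InjOn f Z) {p : ℝ} (hp : 0 < p)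
    (hdvd : ∀ z ∈ Z, f z ∣ S) (hle : ∀ z ∈ Z, p ≤ f z) : (#Z : ℝ) ≤ S / p := by
  obtain rfl | ⟨z, hz⟩ := Z.eq_empty_or_nonempty
  · rw [card_empty, Nat.cast_zero]
    positivity
  have hfS {z : ι} (hz : z ∈ Z) : (f z : ℝ) ≤ S :=
    Nat.cast_le.2 (Nat.le_of_dvd (Nat.pos_of_ne_zero hS) (hdvd z hz))
  have hcard := card_le_of_forall_dvd_of_mem_Icc hS hf hp ((hle z hz).trans (hfS hz)) hdvd
    fun z hz ↦ ⟨hle z hz, hfS hz⟩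
  rwa [div_self (Nat.cast_ne_zero.2 hS), sub_add_cancel] at hcard

end Divisors

section DivisorSubsets

variable {k n S : ℕ} {A U W : Finset ℕ}

lemma sum_le_of_forall_add_dvd (hS : S ≠ 0) {b : ℕ} {Z : Finset ℕ} (hdvd : ∀ z ∈ Z, b + z ∣ S)
    (hle : ∀ z ∈ Z, z ≤ b) : (∑ z ∈ Z, z : ℝ) ≤ S / 3 + b := by
  obtain rfl | hb := b.eq_zero_or_pos
  · rw [sum_eq_zero fun z hz ↦ by rw [Nat.le_zero.1 (hle z hz), Nat.cast_zero]]
    positivity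
  have hb' : (0 : ℝ) < b := Nat.cast_pos.2 hb
  have hle' : ∀ z ∈ Z, (z : ℝ) ≤ b := fun z hz ↦ Nat.cast_le.2 (hle z hz)
  have hinj (Y : Finset ℕ) : Set.InjOn (b + ·) (Y : Set ℕ) := (add_right_injective b).injOn
  have hall : (#Z : ℝ) ≤ S / b - S / (2 * b) + 1 :=
    card_le_of_forall_dvd_of_mem_Icc hS (hinj Z) hb' (by linarith) hdvd fun z hz ↦ by
      push_cast
      exact ⟨by linarith [z.cast_nonneg (α := ℝ)], by linarith [hle' z hz]⟩
  have hlarge : (#{z ∈ Z | b < 2 * z} : ℝ) ≤ S / (3 * b / 2) - S / (2 * b) + 1 :=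
    card_le_of_forall_dvd_of_mem_Icc hS (hinj _) (by positivity) (by linarith)
      (fun z hz ↦ hdvd z (mem_filter.1 hz).1) fun z hz ↦ by
      rw [mem_filter] at hz
      have hbz : (b : ℝ) < 2 * z := mod_cast hz.2
      push_cast
      exact ⟨by linarith, by linarith [hle' z hz.1]⟩
  -- Bounding every `z` by `b` would only give `S / 2 + b`; the `z ≤ b / 2` are counted half.
  calc (∑ z ∈ Z, z : ℝ) ≤ ∑ z ∈ Z, ((b / 2 : ℝ) + if b < 2 * z then (b / 2 : ℝ) else 0) := by
        refine sum_le_sum fun z hz ↦ ?_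
        split_ifs with h
        · linarith [hle' z hz]
        · have : (2 * z : ℝ) ≤ b := mod_cast not_lt.1 h
          linarith
    _ = (#Z + #{z ∈ Z | b < 2 * z}) * (b / 2 : ℝ) := by
        rw [sum_add_distrib, ← sum_filter, sum_const, sum_const, nsmul_eq_mul, nsmul_eq_mul,
          add_mul]
    _ ≤ (S / b - S / (2 * b) + 1 + (S / (3 * b / 2) - S / (2 * b) + 1)) * (b / 2) := by gcongr
    _ = S / 3 + b := by field

lemma sub_mul_card_filter_dvd_le (hS : S ≠ 0) (b r : ℕ) (U : Finset ℕ) {p : ℝ} (hp : 0 < p) :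
    (#U - r : ℝ) *
      #{B ∈ U.powersetCard (r + 1) | b + ∑ i ∈ B, i ∣ S ∧ p ≤ (b + ∑ i ∈ B, i : ℕ)} ≤
      S / p * (#U).choose (r + 1) := by
  refine sub_mul_card_filter_powersetCard_succ_le fun T _ ↦ ?_
  refine card_le_div_of_forall_dvd (f := fun z ↦ b + ∑ i ∈ insert z T, i) hS ?_ hp
    (fun z hz ↦ (mem_filter.1 hz).2.1) (fun z hz ↦ (mem_filter.1 hz).2.2)
  intro z hz w hw h
  have hz' := (mem_sdiff.1 (mem_filter.1 hz).1).2
  have hw' := (mem_sdiff.1 (mem_filter.1 hw).1).2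
  simp only [sum_insert hz', sum_insert hw'] at h
  omega

lemma sub_mul_card_filter_insert_dvd_le (hS : S ≠ 0) {v : ℕ} {c : ℝ} (hv : S ≤ c * v)
    (hvU : v ∉ U) (r : ℕ) :
    (#U - r : ℝ) * #{T ∈ U.powersetCard (r + 1) | ∑ i ∈ insert v T, i ∣ S} ≤
      c * (#U).choose (r + 1) := by
  have hv0 : (0 : ℝ) < v := Nat.cast_pos.2 <| Nat.pos_of_ne_zero <| by
    rintro rfl
    rw [Nat.cast_zero, mul_zero, Nat.cast_nonpos] at hv
    exact hS hv
  have hfilter : {T ∈ U.powersetCard (r + 1) | ∑ i ∈ insert v T, i ∣ S} =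
      {T ∈ U.powersetCard (r + 1) | v + ∑ i ∈ T, i ∣ S ∧ (v : ℝ) ≤ (v + ∑ i ∈ T, i : ℕ)} := by
    refine filter_congr fun T hT ↦ ?_
    rw [sum_insert fun h ↦ hvU ((mem_powersetCard.1 hT).1 h), Nat.cast_le]
    exact (and_iff_left (Nat.le_add_right _ _)).symm
  rw [hfilter]
  exact (sub_mul_card_filter_dvd_le hS v r U hv0).trans
    (mul_le_mul_of_nonneg_right ((div_le_iff₀ hv0).2 hv) (Nat.cast_nonneg _))

lemma card_filter_insert_dvd_add_card_filter_insert_dvd_le (hS : S ≠ 0) {x y r : ℕ} (hyW : y ∉ W)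
    (hxW : x ∉ insert y W) (hr : 0 < r) (hrW : 5 * (r + 1) ≤ #W + 2) (hx : 3 * S ≤ (#W + 2) * x)
    (hy : 3 * S ≤ (#W + 2) * y) :
    #{T ∈ W.powersetCard r | ∑ i ∈ insert y T, i ∣ S} +
      #{T ∈ (insert y W).powersetCard r | ∑ i ∈ insert x T, i ∣ S} ≤ (#W).choose r := by
  obtain ⟨j, rfl⟩ := Nat.exists_eq_succ_of_ne_zero hr.ne'
  have hcard : #(insert y W) = #W + 1 := card_insert_of_notMem hyW
  have hdiv {z : ℕ} (hz : 3 * S ≤ (#W + 2) * z) : S ≤ (#W + 2) / 3 * (z : ℝ) := by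
    rw [div_mul_eq_mul_div, le_div_iff₀ three_pos, mul_comm (S : ℝ)]
    exact_mod_cast hz
  have hb := sub_mul_card_filter_insert_dvd_le hS (hdiv hy) hyW j
  have hc := sub_mul_card_filter_insert_dvd_le hS (hdiv hx) hxW j
  have hchoose := choose_mul_sub_eq_mul_choose (#W + 1) (j + 1)
  rw [hcard] at hc
  rw [Nat.add_sub_cancel] at hchoose
  rw [← Nat.cast_le (α := ℝ)]
  have hm : (5 * j + 8 : ℝ) ≤ #W := by exact_mod_cast (by omega : 5 * j + 8 ≤ #W)
  push_cast at hc hchoose ⊢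
  set m := (#W : ℝ)
  set b := (#{T ∈ W.powersetCard (j + 1) | ∑ i ∈ insert y T, i ∣ S} : ℝ)
  set c := (#{T ∈ (insert y W).powersetCard (j + 1) | ∑ i ∈ insert x T, i ∣ S} : ℝ)
  set N := ((#W).choose (j + 1) : ℝ)
  have hpos : 0 < (m - j) * (m + 1 - j) := by nlinarith [j.cast_nonneg (α := ℝ)]
  have hquad : (m + 2) / 3 * (m + 1 - j + (m + 1)) ≤ (m - j) * (m + 1 - j) := by
    nlinarith [j.cast_nonneg (α := ℝ)]
  refine le_of_mul_le_mul_left ?_ hpos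
  calc (m - j) * (m + 1 - j) * (b + c)
      = (m + 1 - j) * ((m - j) * b) + (m - j) * ((m + 1 - j) * c) := by ring
    _ ≤ (m + 1 - j) * ((m + 2) / 3 * N) +
          (m - j) * ((m + 2) / 3 * (#W + 1).choose (j + 1)) := by
      gcongr <;> linarith
    _ = (m + 2) / 3 * (m + 1 - j + (m + 1)) * N := by
      linear_combination (m + 2) / 3 * hchoose
    _ ≤ (m - j) * (m + 1 - j) * N := by gcongr

lemma le_mul_card_filter_not_dvd_add (hS : S ≠ 0) (hmax : ∀ z ∈ U, n * z ≤ 3 * S)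
    (hU : S ≤ 2 * ∑ z ∈ U, z) {T : Finset ℕ} (hT : T ⊆ U) (hW : W ⊆ U)
    (hWmax : ∀ w ∈ W, ∀ z ∈ U \ W, z ≤ w) (hTW : ¬ Disjoint T W) :
    n ≤ 18 * (#{z ∈ U \ T | ¬ ∑ i ∈ insert z T, i ∣ S} + #W + 2 * #T) := by
  have hsum_le {Y : Finset ℕ} (hY : Y ⊆ U) : (n * ∑ z ∈ Y, (z : ℝ)) ≤ #Y * (3 * S) := by
    rw [mul_sum]
    exact_mod_cast sum_le_card_nsmul _ _ _ fun z hz ↦ hmax z (hY hz)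
  obtain ⟨w, hwT, hwW⟩ := not_disjoint_iff.1 hTW
  set Z := {z ∈ U \ T | ∑ i ∈ insert z T, i ∣ S}
  set Y := {z ∈ U \ T | ¬ ∑ i ∈ insert z T, i ∣ S}
  have hZW : (∑ z ∈ Z \ W, z : ℝ) ≤ S / 3 + ∑ z ∈ T, (z : ℝ) := by
    rw [← Nat.cast_sum T]
    refine sum_le_of_forall_add_dvd hS (fun z hz ↦ ?_) fun z hz ↦ ?_
    all_goals simp only [Z, mem_sdiff, mem_filter] at hz
    · rw [add_comm, ← sum_insert (f := fun i ↦ i) hz.1.1.2]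
      exact hz.1.2
    · exact (hWmax w hwW z (mem_sdiff.2 ⟨hz.1.1.1, hz.2⟩)).trans
        (single_le_sum (f := fun i ↦ i) (fun _ _ ↦ Nat.zero_le _) hwT)
  have hZW' : (n * ∑ z ∈ Z ∩ W, (z : ℝ)) ≤ #W * (3 * S) := by
    refine (hsum_le (inter_subset_right.trans hW)).trans ?_
    gcongr
    exact inter_subset_right
  have hsum : (n * S : ℝ) ≤ n * (2 * ∑ z ∈ U, (z : ℝ)) := by
    rw [← Nat.cast_sum]
    gcongr
    exact mod_cast hU
  rw [← sum_sdiff hT, ← sum_filter_add_sum_filter_not (U \ T) (fun z ↦ ∑ i ∈ insert z T, i ∣ S),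
    ← sum_inter_add_sum_sdiff Z W] at hsum
  rw [← Nat.cast_le (α := ℝ)]
  refine le_of_mul_le_mul_right ?_ (Nat.cast_pos.2 (Nat.pos_of_ne_zero hS) : (0 : ℝ) < S)
  push_cast
  linarith [hsum_le hT, hsum_le ((filter_subset _ _).trans sdiff_subset : Y ⊆ U),
    mul_le_mul_of_nonneg_left hZW n.cast_nonneg]

lemma choose_le_card_filter_not_dvd (hS : S ≠ 0) (hk : 1 < k) (hkn : 2000 * k ≤ n)
    (hUn : #U ≤ n) (hmax : ∀ z ∈ U, n * z ≤ 3 * S)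
    (hU : S ≤ 2 * ∑ z ∈ U, z) :
    (#U).choose (k - 1) ≤ #{B ∈ U.powersetCard k | ¬ ∑ i ∈ B, i ∣ S} := by
  obtain ⟨r, rfl⟩ := Nat.exists_eq_succ_of_ne_zero (by omega : k ≠ 0)
  have hcardU : n ≤ 6 * #U := by
    have hsum : ∑ z ∈ U, n * z ≤ #U * (3 * S) := sum_le_card_nsmul _ _ _ hmax
    rw [← mul_sum] at hsum
    refine Nat.le_of_mul_le_mul_right ?_ (Nat.pos_of_ne_zero hS)
    nlinarith
  -- `#W = 24 * k` absorbs the factor `24` lost in `hbad`.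
  obtain ⟨W, hWU, hW, hWmax⟩ := exists_subset_card_eq_forall_le U
    (by omega : 24 * (r + 1) ≤ #U)
  have hbad : ∀ T ∈ U.powersetCard r, ¬ Disjoint T W →
      n ≤ 24 * #{z ∈ U \ T | ¬ ∑ i ∈ insert z T, i ∣ S} := by
    intro T hT hTW
    rw [mem_powersetCard] at hT
    have hle := le_mul_card_filter_not_dvd_add hS hmax hU hT.1 hWU hWmax hTW
    omega
  refine Nat.le_of_mul_le_mul_left ?_ (by omega : 0 < 24 * (r + 1))
  calc 24 * (r + 1) * (#U).choose r
      ≤ #U * #{T ∈ U.powersetCard r | ¬ Disjoint T W} := by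
        rw [← hW]
        exact card_mul_choose_le_card_mul_card_filter_not_disjoint hWU (by omega)
    _ ≤ #{T ∈ U.powersetCard r | ¬ Disjoint T W} * n := by
        rw [mul_comm]
        gcongr
    _ ≤ ∑ T ∈ U.powersetCard r with ¬ Disjoint T W,
          24 * #{z ∈ U \ T | ¬ ∑ i ∈ insert z T, i ∣ S} :=
        card_nsmul_le_sum _ _ _ fun T hT ↦ hbad T (mem_filter.1 hT).1 (mem_filter.1 hT).2
    _ ≤ ∑ T ∈ U.powersetCard r, 24 * #{z ∈ U \ T | ¬ ∑ i ∈ insert z T, i ∣ S} :=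
        sum_le_sum_of_subset (filter_subset _ _)
    _ = 24 * (r + 1) * #{B ∈ U.powersetCard (r + 1) | ¬ ∑ i ∈ B, i ∣ S} := by
        rw [← mul_sum, mul_assoc, succ_mul_card_filter_powersetCard_succ]

lemma card_filter_dvd_and_le_le (hAk : 2 * k ≤ #A) (hkA : 128 * #A ≤ k ^ 2)
    (hS : 0 < ∑ i ∈ A, i) :
    (#{B ∈ A.powersetCard k | ∑ i ∈ B, i ∣ ∑ i ∈ A, i ∧
      (k / #A * (∑ i ∈ A, i : ℕ) / 8 : ℝ) ≤ (∑ i ∈ B, i : ℕ)} : ℝ) ≤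
      k / #A / 4 * (#A - 1).choose k := by
  have hA : 0 < #A := card_pos.2 (nonempty_of_sum_ne_zero hS.ne')
  obtain ⟨r, rfl⟩ := Nat.exists_eq_succ_of_ne_zero (by rintro rfl; omega : k ≠ 0)
  set n := #A with hn
  set S := ∑ i ∈ A, i with hSdef
  have hS' : (0 : ℝ) < S := Nat.cast_pos.2 hS
  have hn0 : (0 : ℝ) < n := Nat.cast_pos.2 hA
  have hAk' : (2 * (r + 1) : ℝ) ≤ n := mod_cast hAk
  have hkA' : (128 * n : ℝ) ≤ (r + 1) ^ 2 := mod_cast hkA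
  have hcount := sub_mul_card_filter_dvd_le hS.ne' 0 r A
    (p := (r + 1 : ℕ) / n * S / 8) (by positivity)
  simp only [zero_add, ← hn] at hcount
  have hratio : S / ((r + 1 : ℕ) / n * S / 8 : ℝ) = 8 * n / (r + 1) := by
    push_cast
    field
  rw [hratio] at hcount
  set L := #{B ∈ A.powersetCard (r + 1) | ∑ i ∈ B, i ∣ S ∧
    ((r + 1 : ℕ) / n * S / 8 : ℝ) ≤ (∑ i ∈ B, i : ℕ)}
  have hL : n ^ 2 / 4 * (L : ℝ) ≤ n ^ 2 / 4 * (32 / (r + 1) * (n - 1).choose (r + 1)) := calc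
    n ^ 2 / 4 * (L : ℝ) ≤ (n - (r + 1)) * (n - r) * L := by gcongr; nlinarith
    _ = (n - (r + 1)) * ((n - r) * L) := mul_assoc ..
    _ ≤ (n - (r + 1)) * (8 * n / (r + 1) * n.choose (r + 1)) := by gcongr; linarith
    _ = 8 * n / (r + 1) * (n.choose (r + 1) * (n - (r + 1))) := by ring
    _ = n ^ 2 / 4 * (32 / (r + 1) * (n - 1).choose (r + 1)) := by
      rw [← Nat.cast_add_one, choose_mul_sub_eq_mul_choose]
      ring
  calc (L : ℝ) ≤ 32 / (r + 1) * (n - 1).choose (r + 1) := le_of_mul_le_mul_left hL (by positivity)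
    _ ≤ (r + 1 : ℕ) / n / 4 * (n - 1).choose (r + 1) := by
      refine mul_le_mul_of_nonneg_right ?_ (Nat.cast_nonneg _)
      push_cast
      rw [div_div, div_le_div_iff₀ (by positivity) (by positivity)]
      linarith

lemma two_mul_sum_le_of_sum_dvd_sum {B : Finset ℕ} (hA : ∀ a ∈ A, 0 < a) (hBA : B ⊂ A)
    (hdvd : ∑ i ∈ B, i ∣ ∑ i ∈ A, i) : 2 * ∑ i ∈ B, i ≤ ∑ i ∈ A, i := by
  obtain ⟨a, haA, haB⟩ := exists_of_ssubset hBA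
  have hlt : ∑ i ∈ B, i < ∑ i ∈ A, i :=
    sum_lt_sum_of_subset hBA.1 haA haB (hA a haA) fun _ _ _ ↦ Nat.zero_le _
  obtain ⟨c, hc⟩ := hdvd
  have hc2 : 2 ≤ c := by
    by_contra!
    interval_cases c <;> omega
  rw [hc, mul_comm]
  exact Nat.mul_le_mul_left _ hc2

lemma dk_eq_card_filter (k : ℕ) (A : Finset ℕ) :
    dk k A = #{B ∈ A.powersetCard k | ∑ i ∈ B, i ∣ ∑ i ∈ A, i} :=
  rfl

lemma dk_le_choose_of_sum_le_two_mul {x : ℕ} (hA : ∀ a ∈ A, 0 < a) (hk : 1 < k) (hkA : k < #A)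
    (hx : x ∈ A) (hsum : ∑ i ∈ A, i ≤ 2 * x) : dk k A ≤ (#A - 1).choose k := by
  rw [dk_eq_card_filter, ← card_erase_of_mem hx, ← card_powersetCard]
  refine card_le_card fun B hB ↦ ?_
  rw [mem_filter] at hB
  obtain ⟨hBA, hBk⟩ := mem_powersetCard.1 hB.1
  refine mem_powersetCard.2 ⟨subset_erase.2 ⟨hBA, fun hxB ↦ ?_⟩, hBk⟩
  have hle := two_mul_sum_le_of_sum_dvd_sum hA (ssubset_of_mem_powersetCard hkA hB.1) hB.2
  obtain ⟨y, hyB, hyx⟩ := exists_mem_ne (hBk ▸ hk) x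
  have hlt : x < ∑ i ∈ B, i :=
    single_lt_sum (f := fun i ↦ i) hyx hxB hyB (hA y (hBA hyB)) fun _ _ _ ↦ Nat.zero_le _
  omega

lemma dk_le_choose_of_card_lt_two_mul (hA : ∀ a ∈ A, 0 < a) (hkA : k < #A) (hAk : #A < 2 * k) :
    dk k A ≤ (#A - 1).choose k := by
  rw [dk_eq_card_filter]
  refine card_le_choose_of_forall_union_ne hkA hAk.le (filter_subset _ _) fun B hB C hC hBC ↦ ?_
  rw [mem_filter] at hB hC
  have hB2 := two_mul_sum_le_of_sum_dvd_sum hA (ssubset_of_mem_powersetCard hkA hB.1) hB.2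
  have hC2 := two_mul_sum_le_of_sum_dvd_sum hA (ssubset_of_mem_powersetCard hkA hC.1) hC.2
  obtain ⟨hBA, hBk⟩ := mem_powersetCard.1 hB.1
  obtain ⟨-, hCk⟩ := mem_powersetCard.1 hC.1
  have hinter : (B ∩ C).Nonempty := by
    rw [← card_pos]
    have := card_union_add_card_inter B C
    rw [hBC] at this
    omega
  have hpos : 0 < ∑ i ∈ B ∩ C, i := sum_pos (fun i hi ↦ hA i (hBA (mem_inter.1 hi).1)) hinter
  have hadd : ∑ i ∈ A, i + ∑ i ∈ B ∩ C, i = ∑ i ∈ B, i + ∑ i ∈ C, i := by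
    rw [← hBC, sum_union_inter]
  omega

lemma dk_le_choose_of_card_le_sq (hAk : 2 * k ≤ #A) (hkA : 128 * #A ≤ k ^ 2)
    (hS : 0 < ∑ i ∈ A, i) (hmax : ∀ a ∈ A, 2 * a ≤ ∑ i ∈ A, i) :
    dk k A ≤ (#A - 1).choose k := by
  have hS' : (0 : ℝ) < ∑ i ∈ A, (i : ℝ) := by
    rw [← Nat.cast_sum]
    exact Nat.cast_pos.2 hS
  have hmax' : ∀ a ∈ A, (2 * a : ℝ) ≤ ∑ i ∈ A, (i : ℝ) := fun a ha ↦ by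
    rw [← Nat.cast_sum]
    exact mod_cast hmax a ha
  have hcard : 0 < #A := card_pos.2 (nonempty_of_sum_ne_zero hS.ne')
  have hsmall := card_filter_sum_lt_le (k := k) (fun a _ ↦ a.cast_nonneg) hmax' (by omega) hS'
  have hlarge := card_filter_dvd_and_le_le hAk hkA hS
  push_cast at hlarge
  set p : ℝ := k / #A * (∑ i ∈ A, (i : ℝ)) / 8
  have hsplit : dk k A ≤ #{B ∈ A.powersetCard k | ∑ i ∈ (B : Finset ℕ), (i : ℝ) < p} +
      #{B ∈ A.powersetCard k | ∑ i ∈ B, i ∣ ∑ i ∈ A, i ∧ p ≤ ∑ i ∈ B, (i : ℝ)} := by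
    rw [dk_eq_card_filter]
    refine (card_le_card fun B hB ↦ ?_).trans (card_union_le _ _)
    rw [mem_filter] at hB
    simp only [mem_union, mem_filter, hB, true_and]
    exact lt_or_ge _ _
  rw [← Nat.cast_le (α := ℝ)] at hsplit ⊢
  push_cast at hsplit
  linarith

lemma dk_le_choose_of_three_mul_sum_le {x y : ℕ} (hx : x ∈ A) (hy : y ∈ A) (hxy : x ≠ y)
    (hk : 1 < k) (hkA : 5 * k ≤ #A) (hxS : 3 * ∑ i ∈ A, i ≤ #A * x)
    (hyS : 3 * ∑ i ∈ A, i ≤ #A * y) : dk k A ≤ (#A - 1).choose k := by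
  obtain ⟨r, rfl⟩ := Nat.exists_eq_succ_of_ne_zero (by omega : k ≠ 0)
  have hS : ∑ i ∈ A, i ≠ 0 := fun h ↦ by
    rw [sum_eq_zero_iff] at h
    exact hxy ((h x hx).trans (h y hy).symm)
  obtain ⟨U, hxU, rfl⟩ : ∃ U, x ∉ U ∧ insert x U = A := ⟨_, notMem_erase x A, insert_erase hx⟩
  have hyU : y ∈ U := mem_of_mem_insert_of_ne hy hxy.symm
  obtain ⟨W, hyW, rfl⟩ : ∃ W, y ∉ W ∧ insert y W = U := ⟨_, notMem_erase y U, insert_erase hyU⟩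
  rw [dk_eq_card_filter, card_filter_powersetCard_succ_insert _ _ hxU,
    card_filter_powersetCard_succ_insert _ _ hyW, add_assoc]
  set S := ∑ i ∈ insert x (insert y W), i
  have hcard : #(insert x (insert y W)) = #W + 2 := by
    rw [card_insert_of_notMem hxU, card_insert_of_notMem hyW]
  rw [hcard] at hkA hxS hyS ⊢
  have hW : #{B ∈ W.powersetCard (r + 1) | ∑ i ∈ B, i ∣ S} ≤ (#W).choose (r + 1) :=
    (card_filter_le _ _).trans_eq (card_powersetCard _ _)
  have hxy := card_filter_insert_dvd_add_card_filter_insert_dvd_le hS hyW hxU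
    (Nat.lt_of_succ_lt_succ hk) hkA hxS hyS
  calc _ ≤ (#W).choose (r + 1) + (#W).choose r := Nat.add_le_add hW hxy
    _ = (#W + 2 - 1).choose (r + 1) := by rw [add_comm]; rfl

lemma dk_le_choose_of_mul_le_card (hA : ∀ a ∈ A, 0 < a) (hk : 1 < k) (hkA : 2000 * k ≤ #A) :
    dk k A ≤ (#A - 1).choose k := by
  have hne : A.Nonempty := card_pos.1 (by omega)
  have hS : 0 < ∑ i ∈ A, i := sum_pos hA hne
  obtain ⟨x, hx, hxmax⟩ := exists_max_image A (fun i ↦ i) hne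
  by_cases hx2 : ∑ i ∈ A, i ≤ 2 * x
  · exact dk_le_choose_of_sum_le_two_mul hA hk (by omega) hx hx2
  by_cases hy : ∃ y ∈ A, x ≠ y ∧ 3 * ∑ i ∈ A, i ≤ #A * y
  · obtain ⟨y, hyA, hxy, hyS⟩ := hy
    exact dk_le_choose_of_three_mul_sum_le hx hyA hxy hk (by omega)
      (hyS.trans (Nat.mul_le_mul_left _ (hxmax y hyA))) hyS
  push Not at hy
  have hsum := sum_erase_add A (fun i ↦ i) hx
  have hbad := choose_le_card_filter_not_dvd (U := A.erase x) hS.ne' hk hkA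
    (card_le_card (erase_subset x A))
    (fun z hz ↦ (hy z (mem_of_mem_erase hz) (ne_of_mem_erase hz).symm).le) (by omega)
  have hmono : #{B ∈ (A.erase x).powersetCard k | ¬ ∑ i ∈ B, i ∣ ∑ i ∈ A, i} ≤
      #{B ∈ A.powersetCard k | ¬ ∑ i ∈ B, i ∣ ∑ i ∈ A, i} :=
    card_le_card (filter_subset_filter _ (powersetCard_mono (erase_subset x A)))
  have hsplit := card_filter_add_card_filter_not (s := A.powersetCard k)
    (fun B ↦ ∑ i ∈ B, i ∣ ∑ i ∈ A, i)
  rw [← dk_eq_card_filter, card_powersetCard,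
    Nat.choose_eq_choose_pred_add (by omega) (by omega)] at hsplit
  rw [card_erase_of_mem hx] at hbad
  omega

lemma dk_le_choose (hA : ∀ a ∈ A, 0 < a) (hk : 1 < k) (hkA : k < #A)
    (hcard : 10 ^ 9 ≤ #A) : dk k A ≤ (#A - 1).choose k := by
  obtain h | h := lt_or_ge (#A) (2 * k)
  · exact dk_le_choose_of_card_lt_two_mul hA hkA h
  obtain hkA' | hkA' := le_or_gt (2000 * k) (#A)
  · exact dk_le_choose_of_mul_le_card hA hk hkA'
  have hsq : 128 * #A ≤ k ^ 2 := by nlinarith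
  by_cases hmax : ∀ a ∈ A, 2 * a ≤ ∑ i ∈ A, i
  · exact dk_le_choose_of_card_le_sq h hsq (sum_pos hA (card_pos.1 (by omega))) hmax
  · push Not at hmax
    obtain ⟨x, hx, hlt⟩ := hmax
    exact dk_le_choose_of_sum_le_two_mul hA hk hkA hx hlt.le

lemma exists_choose_le_dk (hk : 0 < k) (hn : 0 < n) :
    ∃ A : Finset ℕ, (∀ a ∈ A, 0 < a) ∧ #A = n ∧ (n - 1).choose k ≤ dk k A := by
  set s := ∑ i ∈ Ico 1 n, i
  have hlt : s + n ≤ (s + n).factorial - s + s := by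
    rw [Nat.sub_add_cancel ((Nat.le_add_right s n).trans (Nat.self_le_factorial _))]
    exact Nat.self_le_factorial _
  have hM : (s + n).factorial - s ∉ Ico 1 n := by
    rw [mem_Ico]
    omega
  refine ⟨insert ((s + n).factorial - s) (Ico 1 n), fun a ha ↦ ?_, ?_, ?_⟩
  · rw [mem_insert, mem_Ico] at ha
    omega
  · rw [card_insert_of_notMem hM, Nat.card_Ico, Nat.sub_add_cancel hn]
  rw [dk_eq_card_filter, ← Nat.card_Ico 1 n, ← card_powersetCard]
  refine card_le_card fun B hB ↦ mem_filter.2 ⟨powersetCard_mono (subset_insert _ _) hB, ?_⟩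
  obtain ⟨hBI, hBk⟩ := mem_powersetCard.1 hB
  rw [sum_insert hM, Nat.sub_add_cancel ((Nat.le_add_right s n).trans (Nat.self_le_factorial _))]
  refine Nat.dvd_factorial (sum_pos (fun i hi ↦ (mem_Ico.1 (hBI hi)).1) (card_pos.1 (by omega))) ?_
  exact (sum_le_sum_of_subset hBI).trans (Nat.le_add_right s n)

lemma dn_eq_choose (hk : 1 < k) (hkn : k < n) (hn : 10 ^ 9 ≤ n) : dn k n = (n - 1).choose k := by
  refine IsGreatest.csSup_eq ⟨?_, ?_⟩
  · obtain ⟨A, hA, rfl, hle⟩ := exists_choose_le_dk (k := k) (n := n) (by omega) (by omega)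
    exact ⟨A, hA, rfl, (dk_le_choose hA hk hkn hn).antisymm hle⟩
  · rintro - ⟨A, hA, rfl, rfl⟩
    exact dk_le_choose hA hk hkn hn

end DivisorSubsets

/-- **Modified Huynh conjecture (Conjecture 2, proved).** For all but finitely many
pairs `(k, n)` with `1 < k < n`, `d(k, n) = C(n-1, k)`. -/
theorem zbarsky_huynh_conjecture_modified :
    {p : ℕ × ℕ | 1 < p.1 ∧ p.1 < p.2 ∧
      dn p.1 p.2 ≠ (p.2 - 1).choose p.1}.Finite := by
  refine ((Set.finite_Iio (10 ^ 9)).prod (Set.finite_Iio (10 ^ 9))).subset ?_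
  rintro ⟨k, n⟩ ⟨hk, hkn, hne⟩
  have hn : n < 10 ^ 9 := by
    by_contra! hn
    exact hne (dn_eq_choose hk hkn hn)
  exact ⟨hkn.trans hn, hn⟩
end

section
/- For any distinct positive integers a_1, ..., a_{n-1} and any 1 ≤ k ≤ n-1, there exists a positive integer a_n, distinct from a_1, ..., a_{n-1}, such that every k-element subset B of {a_1, ..., a_{n-1}} satisfies ∑_{b∈B} b divides a_n + ∑_{i=1}^{n-1} a_i. Consequently, d(k,n) ≥ C(n-1,k) for all 1 ≤ k ≤ n. -/
/-!
Modulo the product of all sums of nonempty subsets of `S`, the residue class of `-∑ S` contains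
arbitrarily large integers; any member exceeding every element of `S` can be taken as `aₙ`. Then
each `k`-element subset of `S` is a divisor of `S ∪ {aₙ}`, which gives the binomial lower bound.
-/

open Filter

theorem frequently_dvd_add {d : ℕ} (hd : d ≠ 0) (t : ℕ) : ∃ᶠ a in atTop, d ∣ a + t := by
  rw [frequently_atTop]
  intro N
  have hle : N + t ≤ d * (N + t) := Nat.le_mul_of_pos_left _ (Nat.pos_of_ne_zero hd)
  refine ⟨d * (N + t) - t, Nat.le_sub_of_add_le hle, ?_⟩
  rw [Nat.sub_add_cancel (le_of_add_le_right hle)]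
  exact dvd_mul_right d (N + t)

theorem frequently_forall_dvd_add {ι : Type*} {s : Finset ι} {f : ι → ℕ}
    (hf : ∀ i ∈ s, f i ≠ 0) (t : ℕ) : ∃ᶠ a in atTop, ∀ i ∈ s, f i ∣ a + t :=
  (frequently_dvd_add (Finset.prod_ne_zero_iff.mpr hf) t).mono fun _ hprod _ hi =>
    (Finset.dvd_prod_of_mem f hi).trans hprod

theorem frequently_forall_sum_dvd_add {ι : Type*} {S : Finset ι} {f : ι → ℕ}
    (hf : ∀ i ∈ S, 0 < f i) (t : ℕ) :
    ∃ᶠ a in atTop, ∀ B ⊆ S, B.Nonempty → B.sum f ∣ a + t := by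
  have hsum : ∀ B ∈ S.powerset.filter Finset.Nonempty, B.sum f ≠ 0 := by
    intro B hB
    obtain ⟨hBS, hne⟩ := Finset.mem_filter.mp hB
    exact (Finset.sum_pos (fun i hi => hf i (Finset.mem_powerset.mp hBS hi)) hne).ne'
  exact (frequently_forall_dvd_add hsum t).mono fun a ha B hBS hne =>
    ha B (Finset.mem_filter.mpr ⟨Finset.mem_powerset.mpr hBS, hne⟩)

theorem exists_pos_notMem_forall_sum_dvd_add {S : Finset ℕ} (hS : ∀ a ∈ S, 0 < a) (t : ℕ) :
    ∃ a, 0 < a ∧ a ∉ S ∧ ∀ B ⊆ S, B.Nonempty → B.sum id ∣ a + t := by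
  have hnotMem : ∀ᶠ a in atTop, a ∉ S := by
    rw [← Nat.cofinite_eq_atTop]
    exact S.eventually_cofinite_notMem
  obtain ⟨a, hdvd, hpos, ha⟩ := ((frequently_forall_sum_dvd_add (f := id) hS t).and_eventually
    ((eventually_gt_atTop 0).and hnotMem)).exists
  exact ⟨a, hpos, ha, hdvd⟩

theorem dk_le_choose_s4 (k : ℕ) (A : Finset ℕ) : dk k A ≤ A.card.choose k :=
  (Finset.card_filter_le _ _).trans_eq (Finset.card_powersetCard k A)

theorem dk_le_dn (k : ℕ) {A : Finset ℕ} (hA : ∀ a ∈ A, 0 < a) : dk k A ≤ dn k A.card := by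
  refine le_csSup ⟨A.card.choose k, ?_⟩ ⟨A, hA, rfl, rfl⟩
  rintro _ ⟨A', -, hcard, rfl⟩
  exact hcard ▸ dk_le_choose_s4 k A'

theorem choose_card_le_dk_insert {S : Finset ℕ} {a k : ℕ} (ha : a ∉ S)
    (hdvd : ∀ B ⊆ S, B.card = k → B.sum id ∣ a + S.sum id) :
    S.card.choose k ≤ dk k (insert a S) := by
  rw [← Finset.card_powersetCard]
  refine Finset.card_le_card fun B hB => ?_
  obtain ⟨hBS, hcard⟩ := Finset.mem_powersetCard.mp hB
  rw [Finset.mem_filter, Finset.mem_powersetCard, Finset.sum_insert ha]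
  exact ⟨⟨hBS.trans (Finset.subset_insert a S), hcard⟩, hdvd B hBS hcard⟩

theorem choose_le_dn_succ (m : ℕ) {k : ℕ} (hk : 0 < k) : m.choose k ≤ dn k (m + 1) := by
  obtain ⟨S, hS, hm⟩ : ∃ S : Finset ℕ, (∀ a ∈ S, 0 < a) ∧ S.card = m :=
    ⟨Finset.Icc 1 m, fun _ ha => (Finset.mem_Icc.mp ha).1, Nat.card_Icc 1 m⟩
  obtain ⟨a, hpos, ha, hdvd⟩ := exists_pos_notMem_forall_sum_dvd_add hS (S.sum id)
  calc m.choose k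
      = S.card.choose k := by rw [hm]
    _ ≤ dk k (insert a S) := choose_card_le_dk_insert ha fun B hBS hB =>
        hdvd B hBS (Finset.card_pos.mp (hB ▸ hk))
    _ ≤ dn k (insert a S).card :=
        dk_le_dn k ((Finset.forall_mem_insert a S _).mpr ⟨hpos, hS⟩)
    _ = dn k (m + 1) := by rw [Finset.card_insert_of_notMem ha, hm]

/-- For any distinct positive integers `a₁, …, a_{n-1}` and any `1 ≤ k ≤ n - 1`, there is
a positive integer `aₙ`, distinct from the others, such that every `k`-element subset `B`
of `{a₁, …, a_{n-1}}` satisfies `∑ B ∣ aₙ + ∑ᵢ aᵢ`. Consequently `d(k, n) ≥ C(n-1, k)`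
for all `1 ≤ k ≤ n`. -/
theorem lower_bound_anti_pencil (n : ℕ) :
    (∀ S : Finset ℕ, (∀ a ∈ S, 0 < a) → S.card = n - 1 →
      ∀ k : ℕ, 1 ≤ k → k ≤ n - 1 →
        ∃ aₙ : ℕ, 0 < aₙ ∧ aₙ ∉ S ∧
          ∀ B ⊆ S, B.card = k → B.sum id ∣ aₙ + S.sum id) ∧
    (∀ k : ℕ, 1 ≤ k → k ≤ n → (n - 1).choose k ≤ dn k n) := by
  constructor
  · intro S hS _ k hk _
    obtain ⟨aₙ, hpos, hnotMem, hdvd⟩ := exists_pos_notMem_forall_sum_dvd_add hS (S.sum id)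
    exact ⟨aₙ, hpos, hnotMem, fun B hBS hB => hdvd B hBS (Finset.card_pos.mp (hB ▸ hk))⟩
  · intro k hk hkn
    simpa only [Nat.sub_add_cancel (hk.trans hkn)] using choose_le_dn_succ (n - 1) hk
end

section
/- For every integer s ≥ 2 and every integer n ≥ 3, d^s(n-1,n) ≥ 2 > C(n-1,n-1). That is, there exists a set A of n distinct positive integers having at least two distinct (n-1)-element subsets B with ∑_{b∈B} b dividing s·∑_{a∈A} a. -/
/-- `d^s_k(A)`: the number of `k`-element subsets of `A` that are `s`-divisors of `A`,
where `B` is an `s`-divisor of `A` if `∑ B` divides `s · ∑ A`. -/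
def dsk (s k : ℕ) (A : Finset ℕ) : ℕ :=
  ((A.powersetCard k).filter (fun B => B.sum id ∣ s * A.sum id)).card

/-- `d^s(k, n)`: the maximum of `d^s_k(A)` over all sets `A` of `n` positive integers. -/
noncomputable def dsn (s k n : ℕ) : ℕ :=
  sSup {t : ℕ | ∃ A : Finset ℕ, (∀ a ∈ A, 0 < a) ∧ A.card = n ∧ dsk s k A = t}

/-!
Let `W = ∑ A`. Deleting `x` leaves an `s`-divisor as soon as `(s + j) x = j W` for some `j`, for
then `(s + j) (W - x) = s W`. To use `j = 1` and `j = 2` at once take `W = (s + 1) (s + 2) t`,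
`x = (s + 2) t` and `y = 2 (s + 1) t`. The other `n - 2` elements must then sum to `(s² - 2) t`;
they can be taken as `1, …, n - 3` and one large number, with `t` chosen so large that none of
them is a multiple of `t`, except possibly `(s² - 2) t` itself, which is neither `x` nor `y`.
-/

section Counting

variable {s k : ℕ} {A : Finset ℕ}

theorem dsk_le_choose : dsk s k A ≤ A.card.choose k :=
  (Finset.card_filter_le _ _).trans_eq (Finset.card_powersetCard k A)

theorem dsk_le_dsn (hpos : ∀ a ∈ A, 0 < a) : dsk s k A ≤ dsn s k A.card := by
  refine le_csSup ⟨A.card.choose k, ?_⟩ ⟨A, hpos, rfl, rfl⟩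
  rintro _ ⟨A', -, hcard, rfl⟩
  exact hcard ▸ dsk_le_choose

theorem two_le_dsk_iff :
    2 ≤ dsk s k A ↔ ∃ B₁ B₂ : Finset ℕ, B₁ ≠ B₂ ∧ B₁ ⊆ A ∧ B₂ ⊆ A ∧
      B₁.card = k ∧ B₂.card = k ∧ B₁.sum id ∣ s * A.sum id ∧ B₂.sum id ∣ s * A.sum id := by
  rw [dsk, Nat.succ_le_iff, Finset.one_lt_card]
  simp only [Finset.mem_filter, Finset.mem_powersetCard]
  constructor
  · rintro ⟨B₁, ⟨⟨hsub₁, hcard₁⟩, hdvd₁⟩, B₂, ⟨⟨hsub₂, hcard₂⟩, hdvd₂⟩, hne⟩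
    exact ⟨B₁, B₂, hne, hsub₁, hsub₂, hcard₁, hcard₂, hdvd₁, hdvd₂⟩
  · rintro ⟨B₁, B₂, hne, hsub₁, hsub₂, hcard₁, hcard₂, hdvd₁, hdvd₂⟩
    exact ⟨B₁, ⟨⟨hsub₁, hcard₁⟩, hdvd₁⟩, B₂, ⟨⟨hsub₂, hcard₂⟩, hdvd₂⟩, hne⟩

end Counting

section Erase

variable {s i j x y : ℕ} {A : Finset ℕ}

theorem sum_erase_dvd_mul_sum (hx : x ∈ A) (h : (s + j) * x = j * A.sum id) :
    (A.erase x).sum id ∣ s * A.sum id := by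
  have hsum : x + (A.erase x).sum id = A.sum id := Finset.add_sum_erase A id hx
  refine ⟨s + j, ?_⟩
  rw [← hsum] at h ⊢
  linarith

theorem two_le_dsk_card_sub_one (hx : x ∈ A) (hy : y ∈ A) (hxy : x ≠ y)
    (hxsum : (s + i) * x = i * A.sum id) (hysum : (s + j) * y = j * A.sum id) :
    2 ≤ dsk s (A.card - 1) A :=
  two_le_dsk_iff.mpr ⟨A.erase x, A.erase y, fun h => hxy ((Finset.erase_inj A hx).mp h),
    Finset.erase_subset x A, Finset.erase_subset y A,
    Finset.card_erase_of_mem hx, Finset.card_erase_of_mem hy,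
    sum_erase_dvd_mul_sum hx hxsum, sum_erase_dvd_mul_sum hy hysum⟩

end Erase

theorem exists_card_eq_sum_eq_mul {m a : ℕ} (hm : 0 < m) (ha : 0 < a) :
    ∃ t > 0, ∃ C : Finset ℕ, C.card = m ∧ (∀ c ∈ C, 0 < c) ∧ C.sum id = a * t ∧
      ∀ b, b * t ∈ C → b = a := by
  obtain ⟨l, rfl⟩ := Nat.exists_eq_add_one.mpr hm
  obtain ⟨a, rfl⟩ := Nat.exists_eq_add_one.mpr ha
  set T := (Finset.Icc 1 l).sum id with hT
  set t := T + l + 1 with ht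
  set z := a * t + l + 1 with hz
  have hzsum : z + T = (a + 1) * t := by rw [hz, add_one_mul, ht]; ring
  have hz_notMem : z ∉ Finset.Icc 1 l := by
    rw [Finset.mem_Icc]
    lia
  refine ⟨t, by lia, insert z (Finset.Icc 1 l), ?_, ?_, ?_, ?_⟩
  · rw [Finset.card_insert_of_notMem hz_notMem, Nat.card_Icc, Nat.add_sub_cancel]
  · simp only [Finset.mem_insert, Finset.mem_Icc]
    lia
  · rw [Finset.sum_insert hz_notMem, id, ← hT, hzsum]
  · intro b hb
    rcases Finset.mem_insert.mp hb with hbz | hb_mem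
    · have hb_lt : b < a + 2 := Nat.lt_of_mul_lt_mul_right (a := t) (by lia)
      have hlt_b : a + 1 < b + 1 := Nat.lt_of_mul_lt_mul_right (a := t) (by lia)
      lia
    · obtain ⟨hpos, hle⟩ := Finset.mem_Icc.mp hb_mem
      have : t ≤ b * t := Nat.le_mul_of_pos_left t (Nat.pos_of_mul_pos_right hpos)
      lia

theorem exists_card_eq_add_two_sum_eq_mul {m p q a : ℕ} (hm : 0 < m) (hp : 0 < p) (hq : 0 < q)
    (ha : 0 < a) (hpq : p ≠ q) (hpa : p ≠ a) (hqa : q ≠ a) :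
    ∃ t > 0, ∃ A : Finset ℕ, A.card = m + 2 ∧ (∀ c ∈ A, 0 < c) ∧
      A.sum id = (p + q + a) * t ∧ p * t ∈ A ∧ q * t ∈ A := by
  obtain ⟨t, ht, C, hcard, hpos, hsum, hmul⟩ := exists_card_eq_sum_eq_mul hm ha
  have hq_notMem : q * t ∉ C := fun hmem => hqa (hmul q hmem)
  have hp_notMem : p * t ∉ insert (q * t) C := by
    rw [Finset.mem_insert, not_or]
    exact ⟨fun h => hpq (Nat.eq_of_mul_eq_mul_right ht h), fun hmem => hpa (hmul p hmem)⟩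
  refine ⟨t, ht, insert (p * t) (insert (q * t) C), ?_, ?_, ?_,
    Finset.mem_insert_self _ _, Finset.mem_insert_of_mem (Finset.mem_insert_self _ _)⟩
  · rw [Finset.card_insert_of_notMem hp_notMem, Finset.card_insert_of_notMem hq_notMem, hcard]
  · rw [Finset.forall_mem_insert, Finset.forall_mem_insert]
    exact ⟨Nat.mul_pos hp ht, Nat.mul_pos hq ht, hpos⟩
  · rw [Finset.sum_insert hp_notMem, Finset.sum_insert hq_notMem, hsum, id, id]
    ring

theorem exists_two_le_dsk_sub_one {s n : ℕ} (hs : 2 ≤ s) (hn : 3 ≤ n) :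
    ∃ A : Finset ℕ, A.card = n ∧ (∀ a ∈ A, 0 < a) ∧ 2 ≤ dsk s (n - 1) A := by
  obtain ⟨m, rfl⟩ := Nat.exists_eq_add_of_le' (Nat.le_of_succ_le hn)
  obtain ⟨a, ha⟩ : ∃ a, s ^ 2 = a + 2 := Nat.exists_eq_add_of_le' (by nlinarith)
  have hpq : s + 2 ≠ 2 * (s + 1) := by lia
  have hpa : s + 2 ≠ a := by
    rcases hs.eq_or_lt with rfl | hs <;> nlinarith
  have hqa : 2 * (s + 1) ≠ a := by
    rcases Nat.lt_or_ge s 4 with hs | hs <;> nlinarith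
  obtain ⟨t, ht, A, hcard, hpos, hsum, hx, hy⟩ :=
    exists_card_eq_add_two_sum_eq_mul (m := m) (by lia) (by lia) (by lia) (by nlinarith)
      hpq hpa hqa
  have hcoeff : s + 2 + 2 * (s + 1) + a = (s + 1) * (s + 2) := by linarith
  rw [hcoeff] at hsum
  have hxy : (s + 2) * t ≠ 2 * (s + 1) * t := fun h => hpq (Nat.eq_of_mul_eq_mul_right ht h)
  have hxsum : (s + 1) * ((s + 2) * t) = 1 * A.sum id := by rw [hsum]; ring
  have hysum : (s + 2) * (2 * (s + 1) * t) = 2 * A.sum id := by rw [hsum]; ring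
  exact ⟨A, hcard, hpos, hcard ▸ two_le_dsk_card_sub_one hx hy hxy hxsum hysum⟩

/-- For every `s ≥ 2` and `n ≥ 3`, `d^s(n-1, n) ≥ 2 > C(n-1, n-1)`: there is a set `A` of
`n` distinct positive integers with at least two distinct `(n-1)`-element subsets `B` such
that `∑ B` divides `s · ∑ A`. -/
theorem k_eq_n_sub_one_exception (s : ℕ) (hs : 2 ≤ s) (n : ℕ) (hn : 3 ≤ n) :
    2 ≤ dsn s (n - 1) n ∧ (n - 1).choose (n - 1) < 2 ∧
    ∃ A : Finset ℕ, A.card = n ∧ (∀ a ∈ A, 0 < a) ∧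
      ∃ B₁ B₂ : Finset ℕ, B₁ ≠ B₂ ∧ B₁ ⊆ A ∧ B₂ ⊆ A ∧
        B₁.card = n - 1 ∧ B₂.card = n - 1 ∧
        B₁.sum id ∣ s * A.sum id ∧ B₂.sum id ∣ s * A.sum id := by
  obtain ⟨A, hcard, hpos, htwo⟩ := exists_two_le_dsk_sub_one hs hn
  refine ⟨?_, ?_, A, hcard, hpos, two_le_dsk_iff.mp htwo⟩
  · exact htwo.trans (hcard ▸ dsk_le_dsn hpos)
  · rw [Nat.choose_self]
    exact one_lt_two
end

section
/- Let n ≥ 1 and d ≥ 1 be integers, and consider the poset on the lattice points {1, ..., n}^d ordered componentwise: (x_1,...,x_d) ≤ (y_1,...,y_d) if and only if x_i ≤ y_i for all i. Then every antichain in this poset has at most (n+d-2)^{d-1}·√(2/d) elements. -/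
/-!
The cube has a symmetric chain decomposition, and each of its chains meets the middle rank level
exactly once, so no antichain is larger than that level. For `d ≥ 4` the size of a level is a
Fourier coefficient, hence at most `(1/π) ∫ |sin (n t) / sin t| ^ d` over `[-π/2, π/2]`. Since
`(sin t / t) * exp (t² / 6)` decreases on `[0, π]`, the kernel is dominated by the Gaussian
`n * exp (-(n² - 1) t² / 6)` on `[0, π/n]`. This contributes `n^(d-1) √(6/(π d))` to leading
order, and the gap between `√(6/π)` and `√2` absorbs the integral over `[π/n, π/2]`, where Jordan's
inequality and the primitive of `1 / sin⁴` suffice. For `d ≤ 3` the levels are counted directly.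
-/

open Finset Real

/-- A symmetric chain decomposition of an order with rank function `rank` and maximal rank `N`:
every fibre of `label` is a chain occupying exactly the ranks from `low` to `N - low`. The chains
are encoded by their labels, which makes the decomposition of a product compositional. -/
structure SymmChainDecomp {α : Type*} [LE α] (rank : α → ℕ) (N : ℕ) where
  Label : Type
  label : α → Label
  low : Label → ℕ
  low_le_rank : ∀ x, low (label x) ≤ rank x
  rank_add_low_le : ∀ x, rank x + low (label x) ≤ N
  le_of_label_eq : ∀ {x y}, label x = label y → rank x ≤ rank y → x ≤ y
  exists_rank_eq : ∀ x s, low (label x) ≤ s → s + low (label x) ≤ N →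
    ∃ z, label z = label x ∧ rank z = s

namespace SymmChainDecomp

universe u

variable {α β : Type*} [LE α] [LE β] {rank : α → ℕ} {rank' : β → ℕ} {N M : ℕ}

theorem card_antichain_le_card_middle_rank [Fintype α] (D : SymmChainDecomp rank N) {U : Finset α}
    (hU : IsAntichain (· ≤ ·) (U : Set α)) : #U ≤ #{x | rank x = N / 2} := by
  have exists_middle (x : α) : ∃ z, D.label z = D.label x ∧ rank z = N / 2 := by
    have := D.low_le_rank x
    have := D.rank_add_low_le x
    exact D.exists_rank_eq x _ (by lia) (by lia)
  choose middle label_middle rank_middle using exists_middle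
  refine card_le_card_of_injOn middle (fun x _ ↦ by simp [rank_middle]) fun x hx y hy hxy ↦ ?_
  have hlabel : D.label x = D.label y := by rw [← label_middle x, hxy, label_middle]
  rcases le_total (rank x) (rank y) with h | h
  · exact hU.eq hx hy (D.le_of_label_eq hlabel h)
  · exact hU.eq' hx hy (D.le_of_label_eq hlabel.symm h)

/-- The chain `Fin n` as a single symmetric chain. -/
def fin (n : ℕ) : SymmChainDecomp (Fin.val : Fin n → ℕ) (n - 1) where
  Label := Unit
  label _ := ()
  low _ := 0
  low_le_rank _ := Nat.zero_le _
  rank_add_low_le x := by lia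
  le_of_label_eq _ h := h
  exists_rank_eq x s _ hs := ⟨⟨s, by have := x.isLt; lia⟩, rfl, rfl⟩

/-- Transport of a symmetric chain decomposition along an order isomorphism. -/
def congr (D : SymmChainDecomp rank N) (e : α ≃o β) (hrank : ∀ x, rank' (e x) = rank x)
    (hN : N = M) : SymmChainDecomp rank' M where
  Label := D.Label
  label y := D.label (e.symm y)
  low := D.low
  low_le_rank y := by simpa [← hrank] using D.low_le_rank (e.symm y)
  rank_add_low_le y := by simpa [← hrank, ← hN] using D.rank_add_low_le (e.symm y)
  le_of_label_eq {x y} hlabel h :=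
    e.symm.le_iff_le.1 (D.le_of_label_eq hlabel (by simpa [← hrank] using h))
  exists_rank_eq y s h₁ h₂ := by
    obtain ⟨z, hz, rfl⟩ := D.exists_rank_eq (e.symm y) s h₁ (hN ▸ h₂)
    exact ⟨e z, by simpa using hz, hrank z⟩

/-- The product of two symmetric chain decompositions. In the rectangle `[0, a] × [0, c]` formed
by a chain of length `a` and one of length `c`, the symmetric chains are the hooks
`min j (a - i) = t`. -/
def prod (D : SymmChainDecomp rank N) (E : SymmChainDecomp rank' M) :
    SymmChainDecomp (fun p : α × β ↦ rank p.1 + rank' p.2) (N + M) where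
  Label := D.Label × E.Label × ℕ
  label p := (D.label p.1, E.label p.2,
    min (rank' p.2 - E.low (E.label p.2)) (N - D.low (D.label p.1) - rank p.1))
  low l := D.low l.1 + E.low l.2.1 + l.2.2
  low_le_rank p := by
    have := D.low_le_rank p.1
    have := E.low_le_rank p.2
    lia
  rank_add_low_le p := by
    have := D.rank_add_low_le p.1
    have := E.rank_add_low_le p.2
    lia
  le_of_label_eq {p q} hlabel h := by
    obtain ⟨hD, hE, _⟩ : _ ∧ _ ∧ _ := by simpa only [Prod.mk.injEq] using hlabel
    have := D.rank_add_low_le p.1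
    have := D.rank_add_low_le q.1
    have := E.low_le_rank p.2
    have := E.low_le_rank q.2
    have : D.low (D.label p.1) = D.low (D.label q.1) := by rw [hD]
    have : E.low (E.label p.2) = E.low (E.label q.2) := by rw [hE]
    exact ⟨D.le_of_label_eq hD (by lia), E.le_of_label_eq hE (by lia)⟩
  exists_rank_eq p s h₁ h₂ := by
    have := D.low_le_rank p.1
    have := D.rank_add_low_le p.1
    have := E.low_le_rank p.2
    have := E.rank_add_low_le p.2
    set b := D.low (D.label p.1) with hb
    set b' := E.low (E.label p.2) with hb'
    set t := min (rank' p.2 - b') (N - b - rank p.1) with ht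
    obtain ⟨r, r', hs, hr, hrN, hr', hrM, hmin⟩ : ∃ r r', r + r' = s ∧ b ≤ r ∧ r + b ≤ N ∧
        b' ≤ r' ∧ r' + b' ≤ M ∧ min (r' - b') (N - b - r) = t := by
      rcases le_total (s + b) (N + b') with h | h
      · exact ⟨s - (b' + t), b' + t, by lia⟩
      · exact ⟨N - b - t, s - (N - b - t), by lia⟩
    obtain ⟨x, hx, rfl⟩ := D.exists_rank_eq p.1 r hr hrN
    obtain ⟨y, hy, rfl⟩ := E.exists_rank_eq p.2 r' hr' hrM
    exact ⟨(x, y), by simp only [hx, hy, ← hb, ← hb', hmin, ht], hs⟩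

/-- The product of finitely many symmetric chain decompositions. -/
def pi : ∀ {d : ℕ} {α : Fin d → Type u} [∀ i, LE (α i)] {rank : ∀ i, α i → ℕ} {N : Fin d → ℕ},
    (∀ i, SymmChainDecomp (rank i) (N i)) →
      SymmChainDecomp (fun x : ∀ i, α i ↦ ∑ i, rank i (x i)) (∑ i, N i)
  | 0, _, _, _, _, _ =>
    { Label := Unit
      label _ := ()
      low _ := 0
      low_le_rank _ := Nat.zero_le _
      rank_add_low_le _ := by simp
      le_of_label_eq _ _ i := i.elim0
      exists_rank_eq x s _ hs := ⟨x, rfl, by simp_all⟩ }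
  | _ + 1, α, _, _, _, D =>
    ((D 0).prod (pi fun i ↦ D i.succ)).congr (Fin.consOrderIso α)
      (fun _ ↦ by simp [Fin.sum_univ_succ]) (Fin.sum_univ_succ _).symm

end SymmChainDecomp

/-- The `m`-th rank level of the cube: the points with coordinate sum `m`, where the coordinates
are shifted to run from `0` to `n - 1`. -/
def cubeLayer (n d m : ℕ) : Finset (Fin d → Fin n) := {x | ∑ i, (x i : ℕ) = m}

theorem card_antichain_le_card_middle_cubeLayer {n d : ℕ} {U : Finset (Fin d → Fin n)}
    (hU : IsAntichain (· ≤ ·) (U : Set (Fin d → Fin n))) :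
    #U ≤ #(cubeLayer n d (d * (n - 1) / 2)) := by
  simpa [cubeLayer] using
    (SymmChainDecomp.pi fun _ : Fin d ↦ .fin n).card_antichain_le_card_middle_rank hU

theorem exists_antichain_fin_card_eq {n d : ℕ} {U : Finset (Fin d → ℕ)}
    (hcube : ∀ x ∈ U, ∀ i, 1 ≤ x i ∧ x i ≤ n)
    (hU : IsAntichain (· ≤ ·) (U : Set (Fin d → ℕ))) :
    ∃ V : Finset (Fin d → Fin n), IsAntichain (· ≤ ·) (V : Set (Fin d → Fin n)) ∧ #V = #U := by
  let shift (x : Fin d → Fin n) (i : Fin d) : ℕ := x i + 1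
  have shift_le {x y} (h : x ≤ y) : shift x ≤ shift y := fun i ↦ Nat.succ_le_succ (h i)
  have shift_injective : Function.Injective shift := fun x y h ↦ by
    ext i
    simpa [shift] using congrFun h i
  have mem_range_shift : ∀ x ∈ U, x ∈ Set.range shift := fun x hx ↦ by
    refine ⟨fun i ↦ ⟨x i - 1, ?_⟩, funext fun i ↦ ?_⟩
    · have := hcube x hx i
      lia
    · exact Nat.sub_add_cancel (hcube x hx i).1
  refine ⟨U.preimage shift shift_injective.injOn, ?_, ?_⟩
  · rw [coe_preimage]
    exact hU.preimage shift_injective fun _ _ ↦ shift_le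
  · rw [card_preimage, filter_true_of_mem mem_range_shift]

theorem card_cubeLayer_succ_le (n d m : ℕ) : #(cubeLayer n (d + 1) m) ≤ n ^ d := by
  have tail_injOn : Set.InjOn Fin.tail (cubeLayer n (d + 1) m : Set (Fin (d + 1) → Fin n)) := by
    intro x hx y hy hxy
    have hsucc (i : Fin d) : x i.succ = y i.succ := congrFun hxy i
    have hzero : x 0 = y 0 := by
      simp only [cubeLayer, coe_filter_univ, Set.mem_ofPred_eq, Fin.sum_univ_succ, hsucc] at hx hy
      lia
    exact funext (Fin.cases hzero hsucc)
  simpa using card_le_card_of_injOn Fin.tail (fun _ _ ↦ mem_univ _) tail_injOn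

theorem sq_le_four_mul_sum_abs_sub_add_one (n : ℕ) (c : ℤ) :
    (n : ℤ) ^ 2 ≤ 4 * ∑ x ∈ range n, |(x : ℤ) - c| + 1 := by
  induction n using Nat.twoStepInduction generalizing c with
  | zero | one => simp
  | more n ih _ =>
    have hinner : ∑ x ∈ range n, |((x + 1 : ℕ) : ℤ) - c| = ∑ x ∈ range n, |(x : ℤ) - (c - 1)| := by
      refine sum_congr rfl fun x _ ↦ ?_
      push_cast
      ring_nf
    have houter : (n : ℤ) + 1 ≤ |((0 : ℕ) : ℤ) - c| + |((n + 1 : ℕ) : ℤ) - c| := by grind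
    rw [sum_range_succ, sum_range_succ', hinner]
    push_cast at houter ⊢
    linarith [ih (c - 1)]

theorem card_cubeLayer_three_filter_le {n m : ℕ} (hm : m ≤ 2 * (n - 1)) (a : Fin n) :
    (#{x ∈ cubeLayer n 3 m | x 0 = a} : ℤ) ≤ n - |(a : ℤ) - (m - (n - 1) : ℕ)| := by
  have card_le_card_second_coord : #{x ∈ cubeLayer n 3 m | x 0 = a} ≤
      #(Icc (m - a - (n - 1)) (min (n - 1) (m - a))) := by
    refine card_le_card_of_injOn (fun x ↦ (x 1 : ℕ)) (fun x hx ↦ ?_) fun x hx y hy hxy ↦ ?_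
    · simp only [cubeLayer, Fin.sum_univ_three, coe_filter, mem_filter, mem_univ, true_and,
        Set.mem_ofPred_eq, coe_Icc, Set.mem_Icc, tsub_le_iff_right, le_inf_iff] at hx ⊢
      grind
    · simp only [cubeLayer, Fin.sum_univ_three, coe_filter, mem_filter, mem_univ, true_and,
        Set.mem_ofPred_eq] at hx hy hxy
      funext i
      fin_cases i <;> grind
  rw [Nat.card_Icc] at card_le_card_second_coord
  grind

theorem four_mul_card_cubeLayer_three_le {n m : ℕ} (hm : m ≤ 2 * (n - 1)) :
    4 * #(cubeLayer n 3 m) ≤ 3 * n ^ 2 + 1 := by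
  set c := m - (n - 1)
  have hcard : (#(cubeLayer n 3 m) : ℤ) ≤ n ^ 2 - ∑ x ∈ range n, |(x : ℤ) - c| := by
    rw [card_eq_sum_card_fiberwise (f := fun x ↦ x 0) (t := univ) (fun _ _ ↦ mem_univ _)]
    calc
      _ ≤ ∑ a : Fin n, ((n : ℤ) - |(a : ℤ) - c|) := by
        push_cast
        exact sum_le_sum fun a _ ↦ card_cubeLayer_three_filter_le hm a
      _ = _ := by simp [sum_sub_distrib, Fin.sum_univ_eq_sum_range (fun x ↦ |(x : ℤ) - c|), sq]
  have := sq_le_four_mul_sum_abs_sub_add_one n c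
  zify
  linarith

theorem mul_cos_le_sin {x : ℝ} (hx : 0 ≤ x) (hxπ : x ≤ π) : x * cos x ≤ sin x := by
  have hmono : MonotoneOn (fun x ↦ sin x - x * cos x) (Set.Icc 0 π) := by
    refine monotoneOn_of_hasDerivWithinAt_nonneg (f' := fun x ↦ x * sin x) (convex_Icc _ _)
      (by fun_prop) (fun x _ ↦ ?_) fun x hx ↦ ?_
    · have := (hasDerivAt_sin x).sub ((hasDerivAt_id x).mul (hasDerivAt_cos x))
      exact (this.congr_deriv (by simp)).hasDerivWithinAt
    · rw [interior_Icc] at hx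
      exact mul_nonneg hx.1.le (sin_nonneg_of_nonneg_of_le_pi hx.1.le hx.2.le)
  simpa using hmono (Set.left_mem_Icc.2 pi_pos.le) ⟨hx, hxπ⟩ hx

theorem sq_mul_sin_le {x : ℝ} (hx : 0 ≤ x) (hxπ : x ≤ π) :
    x ^ 2 * sin x ≤ 3 * (sin x - x * cos x) := by
  have hmono : MonotoneOn (fun x ↦ 3 * (sin x - x * cos x) - x ^ 2 * sin x) (Set.Icc 0 π) := by
    refine monotoneOn_of_hasDerivWithinAt_nonneg (f' := fun x ↦ x * (sin x - x * cos x))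
      (convex_Icc _ _) (by fun_prop) (fun x _ ↦ ?_) fun x hx ↦ ?_
    · have := (((hasDerivAt_sin x).sub ((hasDerivAt_id x).mul (hasDerivAt_cos x))).const_mul 3).sub
        ((hasDerivAt_pow 2 x).mul (hasDerivAt_sin x))
      refine (this.congr_deriv ?_).hasDerivWithinAt
      simp only [id_eq, Nat.cast_ofNat]
      ring
    · rw [interior_Icc] at hx
      exact mul_nonneg hx.1.le (sub_nonneg.2 (mul_cos_le_sin hx.1.le hx.2.le))
  simpa using hmono (Set.left_mem_Icc.2 pi_pos.le) ⟨hx, hxπ⟩ hx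

theorem antitoneOn_sinc_mul_exp_sq_div_six :
    AntitoneOn (fun x ↦ sinc x * exp (x ^ 2 / 6)) (Set.Icc 0 π) := by
  refine antitoneOn_of_hasDerivWithinAt_nonpos
    (f' := fun x ↦ (x ^ 2 * sin x - 3 * (sin x - x * cos x)) / (3 * x ^ 2) * exp (x ^ 2 / 6))
    (convex_Icc _ _) ?_ (fun x hx ↦ ?_) fun x hx ↦ ?_
  · have := continuous_sinc
    fun_prop
  · rw [interior_Icc] at hx
    have hx0 : x ≠ 0 := hx.1.ne'
    have hderiv := ((hasDerivAt_sin x).div (hasDerivAt_id x) hx0).mul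
      (((hasDerivAt_pow 2 x).div_const 6).exp)
    have hsinc : (fun x ↦ sinc x * exp (x ^ 2 / 6)) =ᶠ[nhds x]
        fun x ↦ sin x / x * exp (x ^ 2 / 6) := by
      filter_upwards [eventually_ne_nhds hx0] with y hy
      rw [sinc_of_ne_zero hy]
    refine ((hderiv.congr_of_eventuallyEq hsinc).congr_deriv ?_).hasDerivWithinAt
    simp only [Pi.div_apply, id_eq, Nat.cast_ofNat]
    field_simp
    ring
  · rw [interior_Icc] at hx
    have := sq_mul_sin_le hx.1.le hx.2.le
    exact mul_nonpos_of_nonpos_of_nonneg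
      (div_nonpos_of_nonpos_of_nonneg (by linarith) (by positivity)) (exp_pos _).le

theorem sin_ne_zero_of_mem_uIcc {a b t : ℝ} (ha : a ∈ Set.Ioo 0 π) (hb : b ∈ Set.Ioo 0 π)
    (ht : t ∈ Set.uIcc a b) : sin t ≠ 0 :=
  (sin_pos_of_mem_Ioo (Set.ordConnected_Ioo.uIcc_subset ha hb ht)).ne'

theorem intervalIntegrable_one_div_sin_pow {a b : ℝ} (ha : a ∈ Set.Ioo 0 π)
    (hb : b ∈ Set.Ioo 0 π) (k : ℕ) :
    IntervalIntegrable (fun t ↦ 1 / sin t ^ k) MeasureTheory.volume a b :=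
  (continuousOn_const.div (by fun_prop)
    fun _ ht ↦ pow_ne_zero k (sin_ne_zero_of_mem_uIcc ha hb ht)).intervalIntegrable

theorem integral_one_div_sin_pow_four {a b : ℝ} (ha : a ∈ Set.Ioo 0 π) (hb : b ∈ Set.Ioo 0 π) :
    ∫ t in a..b, 1 / sin t ^ 4 = cot a + cot a ^ 3 / 3 - (cot b + cot b ^ 3 / 3) := by
  have hderiv : ∀ t ∈ Set.uIcc a b,
      HasDerivAt (fun t ↦ -(cos t / sin t + (cos t / sin t) ^ 3 / 3)) (1 / sin t ^ 4) t := by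
    intro t ht
    have hs := sin_ne_zero_of_mem_uIcc ha hb ht
    have hcot : HasDerivAt (fun t ↦ cos t / sin t) (-1 / sin t ^ 2) t :=
      ((hasDerivAt_cos t).div (hasDerivAt_sin t) hs).congr_deriv <| by
        congr 1
        linear_combination -sin_sq_add_cos_sq t
    refine (hcot.add ((hcot.pow 3).div_const 3)).neg.congr_deriv ?_
    simp only [Nat.add_one_sub_one, div_pow, cos_sq']
    push_cast
    field_simp
    ring
  rw [intervalIntegral.integral_eq_sub_of_hasDerivAt hderiv
    (intervalIntegrable_one_div_sin_pow ha hb 4)]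
  simp only [cot_eq_cos_div_sin]
  ring

theorem cot_le_inv {x : ℝ} (hx : 0 < x) (hxπ : x < π) : cot x ≤ x⁻¹ := by
  rw [cot_eq_cos_div_sin, div_le_iff₀ (sin_pos_of_pos_of_lt_pi hx hxπ), inv_mul_eq_div,
    le_div_iff₀ hx, mul_comm]
  exact mul_cos_le_sin hx.le hxπ.le

theorem integral_exp_two_mul_int (k : ℤ) :
    ∫ t in (-(π / 2))..(π / 2), Complex.exp (2 * k * Complex.I * t) =
      if k = 0 then (π : ℂ) else 0 := by
  split_ifs with hk
  · subst hk
    simp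
  · have periodic : Complex.exp (2 * k * Complex.I * (π / 2 : ℝ)) =
        Complex.exp (2 * k * Complex.I * (-(π / 2) : ℝ)) :=
      Complex.exp_eq_exp_iff_exists_int.2 ⟨k, by push_cast; ring⟩
    rw [integral_exp_mul_complex (by simp [hk]), periodic, sub_self, zero_div]

/-- The geometric sum `∑ exp (2 i j t)`, equal up to a unimodular factor to the Dirichlet kernel
`sin (n t) / sin t`. Its `d`-th power is the generating function of the coordinate sums in the
cube `{0, …, n - 1}^d`. -/
noncomputable def dirichletSum (n : ℕ) (t : ℝ) : ℂ :=
  ∑ j ∈ range n, Complex.exp (2 * j * t * Complex.I)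

namespace dirichletSum

variable (n : ℕ)

theorem continuous : Continuous (dirichletSum n) := by
  unfold dirichletSum
  fun_prop

theorem norm_mul_abs_sin (t : ℝ) : ‖dirichletSum n t‖ * |sin t| = |sin (n * t)| := by
  have hgeom : dirichletSum n t * (Complex.exp (Complex.I * (2 * t : ℝ)) - 1) =
      Complex.exp (Complex.I * (2 * (n * t) : ℝ)) - 1 := by
    have hpow (j : ℕ) : Complex.exp (2 * j * t * Complex.I) =
        Complex.exp (Complex.I * (2 * t : ℝ)) ^ j := by
      rw [← Complex.exp_nat_mul]
      push_cast
      ring_nf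
    simp only [dirichletSum, hpow]
    rw [geom_sum_mul, ← Complex.exp_nat_mul]
    push_cast
    ring_nf
  have hnorm := congrArg norm hgeom
  simp only [norm_mul, Complex.norm_exp_I_mul_ofReal_sub_one, norm_eq_abs, abs_two,
    mul_div_cancel_left₀ _ (two_ne_zero' ℝ)] at hnorm
  linarith

theorem norm_neg (t : ℝ) : ‖dirichletSum n (-t)‖ = ‖dirichletSum n t‖ := by
  have hconj : dirichletSum n (-t) = starRingEnd ℂ (dirichletSum n t) := by
    simp [dirichletSum, ← Complex.exp_conj, Complex.conj_ofNat]
  rw [hconj, Complex.norm_conj]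

theorem pow_mul_exp (d m : ℕ) (t : ℝ) :
    dirichletSum n t ^ d * Complex.exp ((-(2 * m * t) : ℝ) * Complex.I) =
      ∑ x : Fin d → Fin n, Complex.exp (2 * (∑ i, (x i : ℤ) - m : ℤ) * Complex.I * t) := by
  rw [dirichletSum, ← Fin.sum_univ_eq_sum_range (fun j ↦ Complex.exp (2 * j * t * Complex.I)),
    Fintype.sum_pow, sum_mul]
  refine sum_congr rfl fun x _ ↦ ?_
  rw [← Complex.exp_sum, ← Complex.exp_add, ← sum_mul, ← sum_mul, ← mul_sum]
  push_cast
  ring_nf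

theorem integral_pow_mul_exp (d m : ℕ) :
    ∫ t in (-(π / 2))..(π / 2),
        dirichletSum n t ^ d * Complex.exp ((-(2 * m * t) : ℝ) * Complex.I) =
      π * #(cubeLayer n d m) := by
  simp_rw [pow_mul_exp]
  rw [intervalIntegral.integral_finsetSum
    fun x _ ↦ Continuous.intervalIntegrable (by fun_prop) _ _]
  have mem_layer (x : Fin d → Fin n) :
      ∑ i, (x i : ℤ) - m = 0 ↔ ∑ i, (x i : ℕ) = m := by
    rw [sub_eq_zero]
    norm_cast
  simp only [integral_exp_two_mul_int, mem_layer, ← sum_filter, sum_const, nsmul_eq_mul]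
  exact mul_comm _ _

variable {n}

theorem norm_le_mul_exp_neg {t : ℝ} (hn : 1 ≤ n) (ht : 0 < t) (htπ : t < π) (hnt : n * t ≤ π) :
    ‖dirichletSum n t‖ ≤ n * exp (-((n ^ 2 - 1) / 6) * t ^ 2) := by
  have hn' : (1 : ℝ) ≤ n := by exact_mod_cast hn
  have hsin : 0 < sin t := sin_pos_of_pos_of_lt_pi ht htπ
  have hsin' : 0 ≤ sin (n * t) := sin_nonneg_of_nonneg_of_le_pi (by positivity) hnt
  have hnorm : ‖dirichletSum n t‖ = sin (n * t) / sin t := by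
    rw [eq_div_iff hsin.ne', ← abs_of_pos hsin, norm_mul_abs_sin, abs_of_nonneg hsin']
  have hanti : sin (n * t) / (n * t) * exp ((n * t) ^ 2 / 6) ≤ sin t / t * exp (t ^ 2 / 6) := by
    simpa only [sinc_of_ne_zero ht.ne', sinc_of_ne_zero (by positivity : n * t ≠ 0)] using
      antitoneOn_sinc_mul_exp_sq_div_six ⟨ht.le, htπ.le⟩ ⟨by positivity, hnt⟩
        (le_mul_of_one_le_left ht.le hn')
  have hexp : exp (-((n ^ 2 - 1) / 6) * t ^ 2) = exp (t ^ 2 / 6) / exp ((n * t) ^ 2 / 6) := by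
    rw [← exp_sub]
    ring_nf
  rw [hnorm, hexp, div_le_iff₀ hsin]
  calc
    sin (n * t) = sin (n * t) / (n * t) * exp ((n * t) ^ 2 / 6) *
        (n * t / exp ((n * t) ^ 2 / 6)) := by field_simp
    _ ≤ sin t / t * exp (t ^ 2 / 6) * (n * t / exp ((n * t) ^ 2 / 6)) := by gcongr
    _ = n * (exp (t ^ 2 / 6) / exp ((n * t) ^ 2 / 6)) * sin t := by field_simp

theorem integral_norm_pow_le_gaussian (hn : 2 ≤ n) {d : ℕ} (hd : d ≠ 0) :
    ∫ t in (0 : ℝ)..(π / n), ‖dirichletSum n t‖ ^ d ≤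
      n ^ d * (√(π / (d * ((n ^ 2 - 1) / 6))) / 2) := by
  have hn' : (2 : ℝ) ≤ n := by exact_mod_cast hn
  have hnpos : (0 : ℝ) < n := by linarith
  set b : ℝ := d * ((n ^ 2 - 1) / 6)
  have hb : 0 < b := mul_pos (by positivity) (by nlinarith)
  calc
    ∫ t in (0 : ℝ)..(π / n), ‖dirichletSum n t‖ ^ d
      ≤ ∫ t in (0 : ℝ)..(π / n), n ^ d * exp (-b * t ^ 2) := by
      refine intervalIntegral.integral_mono_on_of_le_Ioo (by positivity)
        (((continuous n).norm.pow d).intervalIntegrable _ _)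
        (Continuous.intervalIntegrable (by fun_prop) _ _) fun t ht ↦ ?_
      have hnt : n * t < π := by rw [mul_comm, ← lt_div_iff₀ hnpos]; exact ht.2
      have htπ : t < π := by nlinarith [ht.1]
      calc
        ‖dirichletSum n t‖ ^ d ≤ (n * exp (-((n ^ 2 - 1) / 6) * t ^ 2)) ^ d := by
          gcongr
          exact norm_le_mul_exp_neg (by lia) ht.1 htπ hnt.le
        _ = n ^ d * exp (-b * t ^ 2) := by
          rw [mul_pow, ← exp_nat_mul]
          congr 2
          ring
    _ ≤ n ^ d * ∫ t in Set.Ioi (0 : ℝ), exp (-b * t ^ 2) := by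
      rw [intervalIntegral.integral_const_mul, intervalIntegral.integral_of_le (by positivity)]
      exact mul_le_mul_of_nonneg_left (MeasureTheory.setIntegral_mono_set
        (integrable_exp_neg_mul_sq hb).integrableOn (.of_forall fun _ ↦ (exp_pos _).le)
        Set.Ioc_subset_Ioi_self.eventuallyLE) (by positivity)
    _ = n ^ d * (√(π / b) / 2) := by rw [integral_gaussian_Ioi]

theorem norm_pow_add_four_le (k : ℕ) {t : ℝ} (ht : t ∈ Set.Icc (π / n) (π / 2)) (hn : n ≠ 0) :
    ‖dirichletSum n t‖ ^ (k + 4) ≤ (n / 2) ^ k * (1 / sin t ^ 4) := by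
  have htpos : 0 < t := lt_of_lt_of_le (by positivity) ht.1
  have hsin : 0 < sin t := sin_pos_of_pos_of_lt_pi htpos (by linarith [ht.2, pi_pos])
  have hnorm : ‖dirichletSum n t‖ ≤ 1 / sin t := by
    rw [le_div_iff₀ hsin, ← abs_of_pos hsin, norm_mul_abs_sin]
    exact abs_sin_le_one _
  have hjordan : 1 / sin t ≤ n / 2 := by
    rw [one_div_le hsin (by positivity), one_div_div]
    calc
      (2 : ℝ) / n = 2 / π * (π / n) := by field_simp
      _ ≤ 2 / π * t := by gcongr; exact ht.1
      _ ≤ sin t := mul_le_sin htpos.le ht.2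
  calc
    ‖dirichletSum n t‖ ^ (k + 4) = ‖dirichletSum n t‖ ^ k * ‖dirichletSum n t‖ ^ 4 := pow_add _ _ _
    _ ≤ (n / 2) ^ k * (1 / sin t) ^ 4 := by
      gcongr
      exact hnorm.trans hjordan
    _ = (n / 2) ^ k * (1 / sin t ^ 4) := by rw [one_div_pow]

theorem integral_norm_pow_add_four_le (hn : 2 ≤ n) (k : ℕ) :
    ∫ t in (π / n)..(π / 2), ‖dirichletSum n t‖ ^ (k + 4) ≤
      (n / 2) ^ k * (n / π + (n / π) ^ 3 / 3) := by
  have hn' : (2 : ℝ) ≤ n := by exact_mod_cast hn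
  have ha : 0 < π / n := by positivity
  have ha' : π / n ≤ π / 2 := by gcongr
  have ha_mem : π / n ∈ Set.Ioo 0 π := ⟨ha, by linarith [pi_pos]⟩
  have hpi_mem : π / 2 ∈ Set.Ioo 0 π := ⟨by positivity, by linarith [pi_pos]⟩
  have hcot : cot (π / n) ≤ n / π := by simpa using cot_le_inv ha_mem.1 ha_mem.2
  have hcot0 : 0 ≤ cot (π / n) := by
    rw [cot_eq_cos_div_sin]
    exact div_nonneg (cos_nonneg_of_mem_Icc ⟨by linarith [pi_pos], ha'⟩)
      (sin_pos_of_mem_Ioo ha_mem).le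
  calc
    ∫ t in (π / n)..(π / 2), ‖dirichletSum n t‖ ^ (k + 4)
      ≤ ∫ t in (π / n)..(π / 2), (n / 2 : ℝ) ^ k * (1 / sin t ^ 4) :=
      intervalIntegral.integral_mono_on ha' (((continuous n).norm.pow _).intervalIntegrable _ _)
        ((intervalIntegrable_one_div_sin_pow ha_mem hpi_mem 4).const_mul _)
        fun t ht ↦ norm_pow_add_four_le k ht (by lia)
    _ = (n / 2) ^ k * (cot (π / n) + cot (π / n) ^ 3 / 3) := by
      rw [intervalIntegral.integral_const_mul, integral_one_div_sin_pow_four ha_mem hpi_mem]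
      simp [cot_eq_cos_div_sin]
    _ ≤ (n / 2) ^ k * (n / π + (n / π) ^ 3 / 3) := by gcongr

end dirichletSum

theorem pi_mul_card_cubeLayer_le (n d m : ℕ) :
    π * #(cubeLayer n d m) ≤ 2 * ∫ t in (0 : ℝ)..(π / 2), ‖dirichletSum n t‖ ^ d := by
  have hint (a b : ℝ) : IntervalIntegrable (fun t ↦ ‖dirichletSum n t‖ ^ d)
      MeasureTheory.volume a b := ((dirichletSum.continuous n).norm.pow d).intervalIntegrable a b
  have even : ∫ t in (-(π / 2))..0, ‖dirichletSum n t‖ ^ d =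
      ∫ t in (0 : ℝ)..(π / 2), ‖dirichletSum n t‖ ^ d := by
    simpa [dirichletSum.norm_neg] using (intervalIntegral.integral_comp_neg (a := 0) (b := π / 2)
      fun t ↦ ‖dirichletSum n t‖ ^ d).symm
  calc
    π * #(cubeLayer n d m) = ‖∫ t in (-(π / 2))..(π / 2),
        dirichletSum n t ^ d * Complex.exp ((-(2 * m * t) : ℝ) * Complex.I)‖ := by
      rw [dirichletSum.integral_pow_mul_exp, norm_mul, Complex.norm_real, Complex.norm_natCast,
        norm_of_nonneg pi_pos.le]
    _ ≤ ∫ t in (-(π / 2))..(π / 2),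
        ‖dirichletSum n t ^ d * Complex.exp ((-(2 * m * t) : ℝ) * Complex.I)‖ :=
      intervalIntegral.norm_integral_le_integral_norm (by linarith [pi_pos])
    _ = ∫ t in (-(π / 2))..(π / 2), ‖dirichletSum n t‖ ^ d := by
      simp only [norm_mul, norm_pow, Complex.norm_exp_ofReal_mul_I, mul_one]
    _ = 2 * ∫ t in (0 : ℝ)..(π / 2), ‖dirichletSum n t‖ ^ d := by
      rw [← intervalIntegral.integral_add_adjacent_intervals (hint _ 0) (hint 0 _), even, two_mul]

theorem gaussian_bound_le_mul_sqrt {x d : ℝ} (hx : 2 ≤ x) (hd : 0 ≤ d) :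
    x ^ 2 * √(π / (d * ((x ^ 2 - 1) / 6))) ≤ 0.98 * π * (x + 1) * √(2 / d) := by
  have hx1 : 0 < x ^ 2 - 1 := by nlinarith
  have hfour : x ^ 4 ≤ (x + 1) ^ 2 * (x ^ 2 - 1) := by nlinarith
  have hπ : 3 ≤ 0.98 ^ 2 * π := by linarith [pi_gt_d2]
  refine le_of_sq_le_sq ?_ (by positivity)
  calc
    (x ^ 2 * √(π / (d * ((x ^ 2 - 1) / 6)))) ^ 2 = 3 * x ^ 4 / (x ^ 2 - 1) * π * (2 / d) := by
      rw [mul_pow, sq_sqrt (by positivity)]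
      field_simp
      ring
    _ ≤ 0.98 ^ 2 * π * ((x + 1) ^ 2 * (x ^ 2 - 1)) / (x ^ 2 - 1) * π * (2 / d) := by gcongr
    _ = (0.98 * π * (x + 1) * √(2 / d)) ^ 2 := by
      rw [mul_pow _ √_, sq_sqrt (by positivity)]
      field_simp

theorem inv_two_pow_le_sqrt (k : ℕ) : ((2 : ℝ) ^ k)⁻¹ ≤ 3 / 2 * √(2 / (k + 4)) := by
  have hk : (k + 1 : ℝ) ≤ 2 ^ k := by exact_mod_cast Nat.lt_two_pow_self
  have hsq : (k + 4 : ℝ) ≤ 4 * (2 ^ k) ^ 2 := by nlinarith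
  refine le_of_sq_le_sq ?_ (by positivity)
  rw [mul_pow, sq_sqrt (by positivity), inv_pow, inv_eq_one_div, mul_div_assoc',
    div_le_div_iff₀ (by positivity) (by positivity)]
  linarith

theorem tail_bound_le_mul_sqrt {x : ℝ} (hx : 1 ≤ x) (k : ℕ) :
    (x / 2) ^ k * (x / π + (x / π) ^ 3 / 3) ≤
      π / 2 * (0.02 * x + 1.02) * x ^ (k + 2) * √(2 / (k + 4)) := by
  have hinner : x / π + (x / π) ^ 3 / 3 ≤ π / 3 * ((0.02 * x + 1.02) * x ^ 2) := by
    have hπ : π⁻¹ ≤ π / 9 := by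
      rw [inv_le_iff_one_le_mul₀ pi_pos]
      nlinarith [pi_gt_three]
    have hπ' : π⁻¹ ^ 3 ≤ π / 81 := by
      rw [inv_pow, inv_le_iff_one_le_mul₀ (by positivity)]
      nlinarith [pow_le_pow_left₀ (by simp) pi_gt_three.le 4]
    calc
      x / π + (x / π) ^ 3 / 3 = x * π⁻¹ + x ^ 3 * π⁻¹ ^ 3 / 3 := by ring
      _ ≤ x * (π / 9) + x ^ 3 * (π / 81) / 3 := by gcongr
      _ = π / 3 * (x / 3 + x ^ 3 / 81) := by ring
      _ ≤ π / 3 * ((0.02 * x + 1.02) * x ^ 2) := by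
        gcongr
        nlinarith [pow_nonneg (by linarith : 0 ≤ x) 3]
  calc
    (x / 2) ^ k * (x / π + (x / π) ^ 3 / 3) = x ^ k * (2 ^ k)⁻¹ * (x / π + (x / π) ^ 3 / 3) := by
      rw [div_pow, div_eq_mul_inv]
    _ ≤ x ^ k * (3 / 2 * √(2 / (k + 4))) * (π / 3 * ((0.02 * x + 1.02) * x ^ 2)) := by
      gcongr
      exact inv_two_pow_le_sqrt k
    _ = π / 2 * (0.02 * x + 1.02) * x ^ (k + 2) * √(2 / (k + 4)) := by ring

theorem card_cubeLayer_add_four_le_mul_sqrt {n : ℕ} (hn : 2 ≤ n) (k m : ℕ) :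
    (#(cubeLayer n (k + 4) m) : ℝ) ≤ (n + 2) * n ^ (k + 2) * √(2 / (k + 4)) := by
  have hn' : (2 : ℝ) ≤ n := by exact_mod_cast hn
  have hint (a b : ℝ) : IntervalIntegrable (fun t ↦ ‖dirichletSum n t‖ ^ (k + 4))
      MeasureTheory.volume a b :=
    ((dirichletSum.continuous n).norm.pow _).intervalIntegrable a b
  have hmain : ∫ t in (0 : ℝ)..(π / n), ‖dirichletSum n t‖ ^ (k + 4) ≤
      π / 2 * (0.98 * (n + 1)) * n ^ (k + 2) * √(2 / (k + 4)) := by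
    have hsqrt := gaussian_bound_le_mul_sqrt hn' (by positivity : (0 : ℝ) ≤ (k + 4 : ℕ))
    calc
      _ ≤ _ := dirichletSum.integral_norm_pow_le_gaussian hn (by lia)
      _ = n ^ (k + 2) / 2 * (n ^ 2 * √(π / ((k + 4 : ℕ) * ((n ^ 2 - 1) / 6)))) := by ring
      _ ≤ n ^ (k + 2) / 2 * (0.98 * π * (n + 1) * √(2 / (k + 4 : ℕ))) := by gcongr
      _ = _ := by
        push_cast
        ring
  have htail := (dirichletSum.integral_norm_pow_add_four_le hn k).trans
    (tail_bound_le_mul_sqrt (by linarith : (1 : ℝ) ≤ n) k)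
  have hfourier := pi_mul_card_cubeLayer_le n (k + 4) m
  rw [← intervalIntegral.integral_add_adjacent_intervals (hint 0 (π / n)) (hint _ _)] at hfourier
  -- The coefficients `0.98 * (n + 1)` and `0.02 * n + 1.02` of the two bounds add up to `n + 2`.
  refine le_of_mul_le_mul_left ?_ pi_pos
  linarith


theorem card_cubeLayer_three_le_mul_sqrt {n m : ℕ} (hm : m ≤ 2 * (n - 1)) :
    (#(cubeLayer n 3 m) : ℝ) ≤ (n + 1) ^ 2 * √(2 / 3) := by
  have hcard : 4 * (#(cubeLayer n 3 m) : ℝ) ≤ 3 * n ^ 2 + 1 := by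
    exact_mod_cast four_mul_card_cubeLayer_three_le hm
  have hsqrt : 3 / 4 ≤ √(2 / 3) := le_sqrt_of_sq_le (by norm_num)
  calc
    (#(cubeLayer n 3 m) : ℝ) ≤ (n + 1) ^ 2 * (3 / 4) := by linarith [n.cast_nonneg (α := ℝ)]
    _ ≤ (n + 1) ^ 2 * √(2 / 3) := by gcongr

theorem one_le_add_three_pow_mul_sqrt (k : ℕ) : 1 ≤ (k + 3 : ℝ) ^ (k + 3) * √(2 / (k + 4)) := by
  have hsqrt : ((k : ℝ) + 3)⁻¹ ≤ √(2 / (k + 4)) := by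
    refine le_sqrt_of_sq_le ?_
    rw [inv_pow, inv_eq_one_div, div_le_div_iff₀ (by positivity) (by positivity)]
    nlinarith [k.cast_nonneg (α := ℝ)]
  calc
    (1 : ℝ) = (k + 3) ^ 1 * ((k : ℝ) + 3)⁻¹ := by field_simp
    _ ≤ (k + 3) ^ (k + 3) * √(2 / (k + 4)) := by
      gcongr
      · linarith [k.cast_nonneg (α := ℝ)]
      · lia

theorem card_cubeLayer_add_four_le {n : ℕ} (hn : 1 ≤ n) (k m : ℕ) :
    (#(cubeLayer n (k + 4) m) : ℝ) ≤ (n + k + 2) ^ (k + 3) * √(2 / (k + 4)) := by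
  rcases hn.eq_or_lt with rfl | hn
  · calc
      (#(cubeLayer 1 (k + 4) m) : ℝ) ≤ 1 := by
        exact_mod_cast (card_cubeLayer_succ_le 1 (k + 3) m).trans_eq (one_pow _)
      _ ≤ (k + 3) ^ (k + 3) * √(2 / (k + 4)) := one_le_add_three_pow_mul_sqrt k
      _ = ((1 : ℕ) + k + 2) ^ (k + 3) * √(2 / (k + 4)) := by
        push_cast
        ring_nf
  · calc
      (#(cubeLayer n (k + 4) m) : ℝ) ≤ (n + 2) * n ^ (k + 2) * √(2 / (k + 4)) :=
        card_cubeLayer_add_four_le_mul_sqrt hn k m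
      _ ≤ (n + k + 2) * (n + k + 2) ^ (k + 2) * √(2 / (k + 4)) := by
        gcongr <;> linarith [k.cast_nonneg (α := ℝ)]
      _ = (n + k + 2) ^ (k + 3) * √(2 / (k + 4)) := by ring

theorem card_middle_cubeLayer_le {n d : ℕ} (hn : 1 ≤ n) (hd : 1 ≤ d) :
    (#(cubeLayer n d (d * (n - 1) / 2)) : ℝ) ≤ (n + d - 2) ^ (d - 1) * √(2 / d) := by
  match d, hd with
  | 1, _ =>
    have hcard : (#(cubeLayer n 1 (1 * (n - 1) / 2)) : ℝ) ≤ 1 := by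
      exact_mod_cast card_cubeLayer_succ_le n 0 _
    simpa using hcard.trans (one_le_sqrt.2 one_le_two)
  | 2, _ =>
    have hcard : (#(cubeLayer n 2 (2 * (n - 1) / 2)) : ℝ) ≤ n := by
      exact_mod_cast (card_cubeLayer_succ_le n 1 _).trans_eq (pow_one n)
    simpa using hcard
  | 3, _ =>
    have hcard : (#(cubeLayer n 3 (3 * (n - 1) / 2)) : ℝ) ≤ (n + 1) ^ 2 * √(2 / 3) :=
      card_cubeLayer_three_le_mul_sqrt (by lia)
    convert hcard using 3 <;> push_cast <;> ring
  | k + 4, _ =>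
    convert card_cubeLayer_add_four_le hn k _ using 3 <;> push_cast <;> ring

/-- **Lemma 1.** Every antichain in the componentwise order on the lattice cube
`{1, …, n}^d` has at most `(n + d - 2)^(d-1) · √(2/d)` elements. -/
theorem cube_antichain_bound (n d : ℕ) (hn : 1 ≤ n) (hd : 1 ≤ d)
    (U : Finset (Fin d → ℕ))
    (hUcube : ∀ x ∈ U, ∀ i, 1 ≤ x i ∧ x i ≤ n)
    (hanti : IsAntichain (· ≤ ·) (U : Set (Fin d → ℕ))) :
    (U.card : ℝ) ≤ ((n : ℝ) + d - 2) ^ (d - 1) * Real.sqrt (2 / d) := by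
  obtain ⟨V, hV, hVU⟩ := exists_antichain_fin_card_eq hUcube hanti
  calc
    (#U : ℝ) ≤ #(cubeLayer n d (d * (n - 1) / 2)) := by
      exact_mod_cast hVU ▸ card_antichain_le_card_middle_cubeLayer hV
    _ ≤ (n + d - 2) ^ (d - 1) * √(2 / d) := card_middle_cubeLayer_le hn hd
end
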